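/- arXiv:math/0404017 — 8 statements merged into one kernel-verified Lean document; each statement's English description precedes it below -/
import Mathlib

section
/- Let E be a finite-dimensional real normed vector space, λ a continuous 1-form on E, φ : E → E a C¹ map, and σ : [0,1] → E a C¹ curve. Assume that for every k ≥ 1 the line integral of the pullback (φᵏ)*λ over the chain l₁ = (φ∘σ) − σ equals the line integral of λ over l₁; that is, for every k ≥ 1, ∫₀¹ λ(φᵏ(φ(σ(t))))((Dφᵏ)(φ(σ(t)))(d/dt φ(σ(t)))) dt − ∫₀¹ λ(φᵏ(σ(t)))((Dφᵏ)(σ(t))(σ'(t))) dt = I_λ(φ∘σ) − I_λ(σ), where φᵏ denotes the k-th iterate of φ. Then for every n ≥ 1 one has I_λ(φⁿ∘σ) − I_λ(σ) = n·(I_λ(φ∘σ) − I_λ(σ)). -/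
open intervalIntegral

/-- The line integral `∫₀¹ λ(c(t))(c'(t)) dt` of a continuous 1-form `λ` along a curve `c`. -/
noncomputable def lineIntegral {E : Type*} [NormedAddCommGroup E] [NormedSpace ℝ E]
    (lam : E → (E →L[ℝ] ℝ)) (c : ℝ → E) : ℝ :=
  ∫ t in (0:ℝ)..1, lam (c t) (deriv c t)

/-- The line integral `∫₀¹ λ(ψ(c(t)))((Dψ)(c(t))(c'(t))) dt` of the pullback `ψ*λ` along `c`. -/
noncomputable def pullbackLineIntegral {E : Type*} [NormedAddCommGroup E] [NormedSpace ℝ E]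
    (lam : E → (E →L[ℝ] ℝ)) (ψ : E → E) (c : ℝ → E) : ℝ :=
  ∫ t in (0:ℝ)..1, lam (ψ (c t)) (fderiv ℝ ψ (c t) (deriv c t))

/-- If for every `k ≥ 1` the integral of `(φᵏ)*λ` over the chain `l₁ = (φ∘σ) − σ` equals
the integral of `λ` over `l₁`, then `I_λ(φⁿ∘σ) − I_λ(σ) = n (I_λ(φ∘σ) − I_λ(σ))`. -/
theorem stmt_1 {E : Type*} [NormedAddCommGroup E] [NormedSpace ℝ E] [FiniteDimensional ℝ E]
    (lam : E → (E →L[ℝ] ℝ)) (hlam : Continuous lam)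
    (φ : E → E) (hφ : ContDiff ℝ 1 φ)
    (σ : ℝ → E) (hσ : ContDiff ℝ 1 σ)
    (hflux : ∀ k : ℕ, 1 ≤ k →
      pullbackLineIntegral lam (φ^[k]) (φ ∘ σ) - pullbackLineIntegral lam (φ^[k]) σ =
        lineIntegral lam (φ ∘ σ) - lineIntegral lam σ) :
    ∀ n : ℕ, 1 ≤ n →
      lineIntegral lam (φ^[n] ∘ σ) - lineIntegral lam σ =
        n * (lineIntegral lam (φ ∘ σ) - lineIntegral lam σ) := by
  have key : ∀ (k : ℕ) (c : ℝ → E), ContDiff ℝ 1 c →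
      pullbackLineIntegral lam (φ^[k]) c = lineIntegral lam (φ^[k] ∘ c) := by
    intro k c hc
    unfold pullbackLineIntegral lineIntegral
    congr 1
    funext t
    have h1 : DifferentiableAt ℝ (φ^[k]) (c t) :=
      ((hφ.differentiable one_ne_zero).iterate k) (c t)
    have h2 : DifferentiableAt ℝ c t := (hc.differentiable one_ne_zero) t
    rw [fderiv_comp_deriv t h1 h2]
    rfl
  intro n hn
  induction n, hn using Nat.le_induction with
  | base => simp
  | succ k hk ih =>
    have h := hflux k hk
    rw [key k _ (hφ.comp hσ), key k _ hσ, ← Function.comp_assoc, ← Function.iterate_succ] at h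
    push_cast
    linarith
end

section
/- Let H : ℝ × (ℝ^d × ℝ^d) → ℝ be a smooth Hamiltonian with a smooth flow φ, and let σ : [0,1] → ℝ^d × ℝ^d be a C¹ curve. Let x(t) = φ(t,σ(0)) and y(t) = φ(t,σ(1)), t ∈ [0,1], be the flow trajectories of the endpoints of σ, and assume they are 1-periodic orbits, i.e. φ(1,σ(0)) = σ(0) and φ(1,σ(1)) = σ(1). Then the Liouville integral over the chain l₁ = (φ(1,·)∘σ) − σ equals the action difference: I(φ(1,·)∘σ) − I(σ) = 𝒜_H(y) − 𝒜_H(x). -/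
open intervalIntegral

/-- The Liouville line integral `I(c) = ∫₀¹ ⟨p(t), q'(t)⟩ dt` of a curve
`c(t) = (q(t), p(t))` in `ℝ^d × ℝ^d`. -/
noncomputable def liouvilleIntegral (d : ℕ)
    (c : ℝ → EuclideanSpace ℝ (Fin d) × EuclideanSpace ℝ (Fin d)) : ℝ :=
  ∫ t in (0:ℝ)..1, @inner ℝ _ _ ((c t).2) (deriv (fun s => (c s).1) t)

/-- The Hamiltonian vector field `X_H(t,(q,p)) = (∂_p H(t,q,p), −∂_q H(t,q,p))`. -/
noncomputable def hamVectorField (d : ℕ)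
    (H : ℝ × (EuclideanSpace ℝ (Fin d) × EuclideanSpace ℝ (Fin d)) → ℝ) (t : ℝ)
    (z : EuclideanSpace ℝ (Fin d) × EuclideanSpace ℝ (Fin d)) :
    EuclideanSpace ℝ (Fin d) × EuclideanSpace ℝ (Fin d) :=
  (gradient (fun p => H (t, (z.1, p))) z.2, - gradient (fun q => H (t, (q, z.2))) z.1)

/-- The symplectic action `𝒜_H(γ) = I(γ) − ∫₀¹ H(t,γ(t)) dt` of a curve `γ`. -/
noncomputable def symplecticAction (d : ℕ)
    (H : ℝ × (EuclideanSpace ℝ (Fin d) × EuclideanSpace ℝ (Fin d)) → ℝ)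
    (γ : ℝ → EuclideanSpace ℝ (Fin d) × EuclideanSpace ℝ (Fin d)) : ℝ :=
  liouvilleIntegral d γ - ∫ t in (0:ℝ)..1, H (t, γ t)

theorem hasDerivAt_fst_aux {E : Type*} [NormedAddCommGroup E] [NormedSpace ℝ E]
    {f : ℝ → E × E} {v : E × E} {t : ℝ} (hf : HasDerivAt f v t) :
    HasDerivAt (fun s => (f s).1) v.1 t :=
  (ContinuousLinearMap.fst ℝ E E).hasFDerivAt.comp_hasDerivAt t hf

theorem hasDerivAt_snd_aux {E : Type*} [NormedAddCommGroup E] [NormedSpace ℝ E]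
    {f : ℝ → E × E} {v : E × E} {t : ℝ} (hf : HasDerivAt f v t) :
    HasDerivAt (fun s => (f s).2) v.2 t :=
  (ContinuousLinearMap.snd ℝ E E).hasFDerivAt.comp_hasDerivAt t hf

theorem swap_aux (h : ℝ → ℝ → ℝ) (hc : Continuous (Function.uncurry h)) :
    ∫ t in (0:ℝ)..1, ∫ s in (0:ℝ)..1, h t s = ∫ s in (0:ℝ)..1, ∫ t in (0:ℝ)..1, h t s := by
  apply MeasureTheory.intervalIntegral_intervalIntegral_swap
  exact (hc.continuousOn.integrableOn_compact
    (isCompact_uIcc.prod isCompact_uIcc)).mono_set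
      (Set.prod_mono Set.uIoc_subset_uIcc Set.uIoc_subset_uIcc)

theorem ham_pair (d : ℕ)
    (H : ℝ × (EuclideanSpace ℝ (Fin d) × EuclideanSpace ℝ (Fin d)) → ℝ)
    (hH : ContDiff ℝ (⊤ : ℕ∞) H) (t : ℝ)
    (z w : EuclideanSpace ℝ (Fin d) × EuclideanSpace ℝ (Fin d)) :
    fderiv ℝ H (t, z) (0, w) =
      - @inner ℝ _ _ (hamVectorField d H t z).2 w.1
        + @inner ℝ _ _ w.2 (hamVectorField d H t z).1 := by
  have hd : HasFDerivAt H (fderiv ℝ H (t, z)) (t, z) :=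
    (hH.differentiable (by simp) (t, z)).hasFDerivAt
  obtain ⟨q, p⟩ := z
  obtain ⟨a, b⟩ := w
  have h1 : HasFDerivAt (fun r => H (t, (r, p)))
      ((fderiv ℝ H (t, (q, p))).comp
        ((ContinuousLinearMap.inr ℝ ℝ _).comp (ContinuousLinearMap.inl ℝ _ _))) q := by
    have hi : HasFDerivAt
        (fun r : EuclideanSpace ℝ (Fin d) => (t, (r, p)))
        ((ContinuousLinearMap.inr ℝ ℝ _).comp (ContinuousLinearMap.inl ℝ _ _)) q :=
      (hasFDerivAt_prodMk_right t (q, p)).comp q (hasFDerivAt_prodMk_left q p)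
    exact HasFDerivAt.comp q (g := H) hd hi
  have h2 : HasFDerivAt (fun r => H (t, (q, r)))
      ((fderiv ℝ H (t, (q, p))).comp
        ((ContinuousLinearMap.inr ℝ ℝ _).comp (ContinuousLinearMap.inr ℝ _ _))) p := by
    have hi : HasFDerivAt
        (fun r : EuclideanSpace ℝ (Fin d) => (t, (q, r)))
        ((ContinuousLinearMap.inr ℝ ℝ _).comp (ContinuousLinearMap.inr ℝ _ _)) p :=
      (hasFDerivAt_prodMk_right t (q, p)).comp p (hasFDerivAt_prodMk_right q p)
    exact HasFDerivAt.comp p (g := H) hd hi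
  have e1 : @inner ℝ _ _ (gradient (fun r => H (t, (r, p))) q) a
      = fderiv ℝ H (t, (q, p)) (0, (a, 0)) := by
    rw [gradient, InnerProductSpace.toDual_symm_apply, h1.fderiv]; simp
  have e2 : @inner ℝ _ _ (gradient (fun r => H (t, (q, r))) p) b
      = fderiv ℝ H (t, (q, p)) (0, (0, b)) := by
    rw [gradient, InnerProductSpace.toDual_symm_apply, h2.fderiv]; simp
  simp only [hamVectorField, inner_neg_left, neg_neg]
  rw [real_inner_comm _ b, e1, e2, ← map_add]
  simp

set_option maxHeartbeats 2000000 in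
/-- If the endpoints of the curve `σ` lie on 1-periodic orbits `x`, `y` of the Hamiltonian
flow `φ` of `H`, then `I(φ(1,·)∘σ) − I(σ) = 𝒜_H(y) − 𝒜_H(x)`. -/
theorem stmt_2 (d : ℕ)
    (H : ℝ × (EuclideanSpace ℝ (Fin d) × EuclideanSpace ℝ (Fin d)) → ℝ)
    (φ : ℝ × (EuclideanSpace ℝ (Fin d) × EuclideanSpace ℝ (Fin d)) →
      EuclideanSpace ℝ (Fin d) × EuclideanSpace ℝ (Fin d))
    (hH : ContDiff ℝ (⊤ : ℕ∞) H) (hφ : ContDiff ℝ (⊤ : ℕ∞) φ)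
    (hφ0 : ∀ z, φ (0, z) = z)
    (hφflow : ∀ t z, deriv (fun s => φ (s, z)) t = hamVectorField d H t (φ (t, z)))
    (σ : ℝ → EuclideanSpace ℝ (Fin d) × EuclideanSpace ℝ (Fin d)) (hσ : ContDiff ℝ 1 σ)
    (hx : φ (1, σ 0) = σ 0) (hy : φ (1, σ 1) = σ 1) :
    liouvilleIntegral d (fun t => φ (1, σ t)) - liouvilleIntegral d σ =
      symplecticAction d H (fun t => φ (t, σ 1)) -
        symplecticAction d H (fun t => φ (t, σ 0)) := by
  have hφd : ∀ u, HasFDerivAt φ (fderiv ℝ φ u) u :=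
    fun u => (hφ.differentiable (by simp) u).hasFDerivAt
  have hφ1 : ContDiff ℝ (⊤ : ℕ∞) (fderiv ℝ φ) := hφ.fderiv_right (by simp)
  have hφ2 : ContDiff ℝ (⊤ : ℕ∞) (fderiv ℝ (fderiv ℝ φ)) := hφ1.fderiv_right (by simp)
  have hφdd : ∀ u, HasFDerivAt (fderiv ℝ φ) (fderiv ℝ (fderiv ℝ φ) u) u :=
    fun u => (hφ1.differentiable (by simp) u).hasFDerivAt
  have hσd : ∀ s, HasDerivAt σ (deriv σ s) s :=
    fun s => (hσ.differentiable (by simp) s).hasDerivAt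
  have hσc : Continuous (deriv σ) := hσ.continuous_deriv (by simp)
  have hσ0 : Continuous σ := hσ.continuous
  -- partial derivatives of a path in the base
  have hT : ∀ (z : EuclideanSpace ℝ (Fin d) × EuclideanSpace ℝ (Fin d)) (t : ℝ),
      HasDerivAt (fun t : ℝ => (t, z)) ((1 : ℝ), 0) t :=
    fun z t => (hasDerivAt_id t).prodMk (hasDerivAt_const t z)
  have hS : ∀ (t s : ℝ), HasDerivAt (fun s : ℝ => (t, σ s)) ((0 : ℝ), deriv σ s) s :=
    fun t s => (hasDerivAt_const s t).prodMk (hσd s)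
  have hφT : ∀ z t, HasDerivAt (fun t => φ (t, z)) (fderiv ℝ φ (t, z) (1, 0)) t :=
    fun z t => (hφd (t, z)).comp_hasDerivAt t (hT z t)
  have hφS : ∀ t s, HasDerivAt (fun s => φ (t, σ s)) (fderiv ℝ φ (t, σ s) (0, deriv σ s)) s :=
    fun t s => (hφd (t, σ s)).comp_hasDerivAt s (hS t s)
  have hX : ∀ t z, hamVectorField d H t (φ (t, z)) = fderiv ℝ φ (t, z) (1, 0) := by
    intro t z
    rw [← hφflow, (hφT z t).deriv]
  set h : ℝ → ℝ → ℝ := fun t s =>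
    @inner ℝ _ _ (φ (t, σ s)).2
        (fderiv ℝ (fderiv ℝ φ) (t, σ s) (1, 0) (0, deriv σ s)).1
      + @inner ℝ _ _ (fderiv ℝ φ (t, σ s) (1, 0)).2 (fderiv ℝ φ (t, σ s) (0, deriv σ s)).1
    with hh
  have hf : ∀ t s, HasDerivAt (fun t => @inner ℝ _ _ (φ (t, σ s)).2
      (fderiv ℝ φ (t, σ s) (0, deriv σ s)).1) (h t s) t := by
    intro t s
    have a1 := hasDerivAt_snd_aux (hφT (σ s) t)
    have a2 : HasDerivAt (fun t => fderiv ℝ φ (t, σ s))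
        (fderiv ℝ (fderiv ℝ φ) (t, σ s) (1, 0)) t :=
      (hφdd (t, σ s)).comp_hasDerivAt t (hT (σ s) t)
    have a3 := hasDerivAt_fst_aux (a2.clm_apply (hasDerivAt_const t ((0 : ℝ), deriv σ s)))
    have a4 := a1.inner ℝ a3
    simpa [hh] using a4
  have hg : ∀ t s, HasDerivAt (fun s => @inner ℝ _ _ (φ (t, σ s)).2
      (fderiv ℝ φ (t, σ s) (1, 0)).1 - H (t, φ (t, σ s))) (h t s) s := by
    intro t s
    have a1 := hasDerivAt_snd_aux (hφS t s)
    have a2 : HasDerivAt (fun s => fderiv ℝ φ (t, σ s))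
        (fderiv ℝ (fderiv ℝ φ) (t, σ s) (0, deriv σ s)) s :=
      (hφdd (t, σ s)).comp_hasDerivAt s (hS t s)
    have a3 := hasDerivAt_fst_aux (a2.clm_apply (hasDerivAt_const s ((1 : ℝ),
      (0 : EuclideanSpace ℝ (Fin d) × EuclideanSpace ℝ (Fin d)))))
    have a4 := a1.inner ℝ a3
    have a5 : HasDerivAt (fun s => (t, φ (t, σ s)))
        ((0 : ℝ), fderiv ℝ φ (t, σ s) (0, deriv σ s)) s :=
      (hasDerivAt_const s t).prodMk (hφS t s)
    have a6 : HasDerivAt (fun s => H (t, φ (t, σ s)))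
        (fderiv ℝ H (t, φ (t, σ s)) (0, fderiv ℝ φ (t, σ s) (0, deriv σ s))) s :=
      HasFDerivAt.comp_hasDerivAt (l := H) s
        (hH.differentiable (by simp) (t, φ (t, σ s))).hasFDerivAt a5
    rw [ham_pair d H hH, hX] at a6
    have sym : fderiv ℝ (fderiv ℝ φ) (t, σ s) (0, deriv σ s) (1, 0)
        = fderiv ℝ (fderiv ℝ φ) (t, σ s) (1, 0) (0, deriv σ s) :=
      (hφ.contDiffAt.isSymmSndFDerivAt (by simpa using (by exact_mod_cast le_top : ((2 : ℕ∞) : WithTop ℕ∞) ≤ ((⊤ : ℕ∞) : WithTop ℕ∞)))) _ _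
    have a7 := a4.sub a6
    refine a7.congr_deriv ?_
    simp [hh, sym]
    try ring
  have hc : Continuous (Function.uncurry h) := by
    have c0 : Continuous (fun u : ℝ × ℝ => (u.1, σ u.2)) := by fun_prop
    have c1 := hφ.continuous.comp c0
    have c2 := hφ1.continuous.comp c0
    have c3 := hφ2.continuous.comp c0
    have c4 : Continuous (fun u : ℝ × ℝ => ((0 : ℝ), deriv σ u.2)) := by fun_prop
    have c5 := c3.clm_apply (continuous_const (y := ((1 : ℝ),
      (0 : EuclideanSpace ℝ (Fin d) × EuclideanSpace ℝ (Fin d)))))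
    exact (c1.snd.inner (c5.clm_apply c4).fst).add
      ((c2.clm_apply (continuous_const (y := ((1 : ℝ),
      (0 : EuclideanSpace ℝ (Fin d) × EuclideanSpace ℝ (Fin d)))))).snd.inner
        (c2.clm_apply c4).fst)
  have hct : ∀ s, Continuous (fun t => h t s) := fun s =>
    hc.comp (continuous_id.prodMk continuous_const)
  have hcs : ∀ t, Continuous (fun s => h t s) := fun t =>
    hc.comp (continuous_const.prodMk continuous_id)
  have F1 : ∀ s, ∫ t in (0:ℝ)..1, h t s = _ := fun s =>
    integral_eq_sub_of_hasDerivAt (fun t _ => hf t s) ((hct s).intervalIntegrable _ _)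
  have F2 : ∀ t, ∫ s in (0:ℝ)..1, h t s = _ := fun t =>
    integral_eq_sub_of_hasDerivAt (fun s _ => hg t s) ((hcs t).intervalIntegrable _ _)
  have swap : ∫ s in (0:ℝ)..1, ∫ t in (0:ℝ)..1, h t s
      = ∫ t in (0:ℝ)..1, ∫ s in (0:ℝ)..1, h t s :=
    (swap_aux h hc).symm
  have I1 : ∀ t s, deriv (fun s => (φ (t, σ s)).1) s
      = (fderiv ℝ φ (t, σ s) (0, deriv σ s)).1 := fun t s => (hasDerivAt_fst_aux (hφS t s)).deriv
  have I2 : ∀ z t, deriv (fun t => (φ (t, z)).1) t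
      = (fderiv ℝ φ (t, z) (1, 0)).1 := fun z t => (hasDerivAt_fst_aux (hφT z t)).deriv
  have hσz : liouvilleIntegral d σ = liouvilleIntegral d (fun s => φ (0, σ s)) := by
    simp only [hφ0]
  have cf : ∀ t, Continuous (fun s => @inner ℝ _ _ (φ (t, σ s)).2
      (fderiv ℝ φ (t, σ s) (0, deriv σ s)).1) := by
    intro t
    have c0 : Continuous (fun s : ℝ => (t, σ s)) := by fun_prop
    have c4 : Continuous (fun s : ℝ => ((0 : ℝ), deriv σ s)) := by fun_prop
    exact (hφ.continuous.comp c0).snd.inner ((hφ1.continuous.comp c0).clm_apply c4).fst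
  have cg : ∀ z, Continuous (fun t => @inner ℝ _ _ (φ (t, z)).2
      (fderiv ℝ φ (t, z) (1, 0)).1) := by
    intro z
    have c0 : Continuous (fun t : ℝ => (t, z)) := by fun_prop
    exact (hφ.continuous.comp c0).snd.inner
      ((hφ1.continuous.comp c0).clm_apply continuous_const).fst
  have cH : ∀ z, Continuous (fun t => H (t, φ (t, z))) := by
    intro z
    have c0 : Continuous (fun t : ℝ => (t, z)) := by fun_prop
    exact hH.continuous.comp (continuous_id.prodMk (hφ.continuous.comp c0))
  have cgH : ∀ z, Continuous (fun t => @inner ℝ _ _ (φ (t, z)).2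
      (fderiv ℝ φ (t, z) (1, 0)).1 - H (t, φ (t, z))) := fun z => (cg z).sub (cH z)
  rw [hσz]
  simp only [symplecticAction, liouvilleIntegral, I1, I2]
  simp only [F1, F2] at swap
  rw [integral_sub ((cf 1).intervalIntegrable _ _) ((cf 0).intervalIntegrable _ _),
    integral_sub ((cgH _).intervalIntegrable _ _)
      ((cgH _).intervalIntegrable _ _),
    integral_sub ((cg _).intervalIntegrable _ _) ((cH _).intervalIntegrable _ _),
    integral_sub ((cg _).intervalIntegrable _ _) ((cH _).intervalIntegrable _ _)] at swap
  exact swap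
end

section
/- Let H : ℝ × (ℝ^d × ℝ^d) → ℝ be a smooth Hamiltonian that is 1-periodic in time, H(t+1,z) = H(t,z), with a smooth flow φ satisfying the cocycle identity φ(t+1,z) = φ(t, φ(1,z)) for all t,z, and let ψ = φ(1,·) be its time-1 map. Let x₀ and y₀ be fixed points of ψ, let x(t) = φ(t,x₀) and y(t) = φ(t,y₀), t ∈ [0,1], be the corresponding 1-periodic orbits, set c = 𝒜_H(y) − 𝒜_H(x), and let σ : [0,1] → ℝ^d × ℝ^d be a C¹ curve with σ(0) = x₀ and σ(1) = y₀. Then for every n ≥ 1, I(ψⁿ∘σ) − I(σ) = n·c, where ψⁿ denotes the n-th iterate of ψ. -/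
open intervalIntegral

section helpers

variable {d : ℕ}

local notation "Ed" => EuclideanSpace ℝ (Fin d)

lemma aux_ham (H : ℝ × (Ed × Ed) → ℝ) (hH : Differentiable ℝ H) (t : ℝ) (z v : Ed × Ed) :
    fderiv ℝ H (t, z) (0, v) =
      inner ℝ (hamVectorField d H t z).1 v.2 - inner ℝ (hamVectorField d H t z).2 v.1 := by
  have h1 : HasFDerivAt (fun p => H (t, (z.1, p)))
      ((fderiv ℝ H (t, z)).comp ((0 : Ed →L[ℝ] ℝ).prod
        ((0 : Ed →L[ℝ] Ed).prod (ContinuousLinearMap.id ℝ Ed)))) z.2 := by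
    have hg : HasFDerivAt (fun p : Ed => (t, (z.1, p))) ((0 : Ed →L[ℝ] ℝ).prod
        ((0 : Ed →L[ℝ] Ed).prod (ContinuousLinearMap.id ℝ Ed))) z.2 :=
      (hasFDerivAt_const _ _).prodMk ((hasFDerivAt_const _ _).prodMk (hasFDerivAt_id _))
    exact HasFDerivAt.comp (g := H) z.2 (hH _).hasFDerivAt hg
  have h2 : HasFDerivAt (fun q => H (t, (q, z.2)))
      ((fderiv ℝ H (t, z)).comp ((0 : Ed →L[ℝ] ℝ).prod
        ((ContinuousLinearMap.id ℝ Ed).prod (0 : Ed →L[ℝ] Ed)))) z.1 := by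
    have hg : HasFDerivAt (fun q : Ed => (t, (q, z.2))) ((0 : Ed →L[ℝ] ℝ).prod
        ((ContinuousLinearMap.id ℝ Ed).prod (0 : Ed →L[ℝ] Ed))) z.1 :=
      (hasFDerivAt_const _ _).prodMk ((hasFDerivAt_id _).prodMk (hasFDerivAt_const _ _))
    exact HasFDerivAt.comp (g := H) z.1 (hH _).hasFDerivAt hg
  have e : ((0 : ℝ), v) = (0, (0, v.2)) + (0, (v.1, 0)) := by ext <;> simp
  simp only [hamVectorField, gradient, inner_neg_left, InnerProductSpace.toDual_symm_apply,
    h1.fderiv, h2.fderiv]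
  rw [e, map_add]
  simp

lemma aux_swap (h : ℝ → ℝ → ℝ) (ch : Continuous (Function.uncurry h)) :
    (∫ s in (0:ℝ)..1, ∫ t in (0:ℝ)..1, h t s) = ∫ t in (0:ℝ)..1, ∫ s in (0:ℝ)..1, h t s := by
  refine MeasureTheory.intervalIntegral_intervalIntegral_swap (F := fun s t => h t s) ?_
  refine MeasureTheory.IntegrableOn.mono_set (t := Set.uIcc (0:ℝ) 1 ×ˢ Set.uIcc (0:ℝ) 1) ?_
    (Set.prod_mono Set.uIoc_subset_uIcc Set.uIoc_subset_uIcc)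
  exact (ch.comp continuous_swap).continuousOn.integrableOn_compact
    (isCompact_uIcc.prod isCompact_uIcc)

set_option maxHeartbeats 2000000 in
lemma aux_step (H : ℝ × (Ed × Ed) → ℝ) (φ : ℝ × (Ed × Ed) → Ed × Ed)
    (hH : ContDiff ℝ (⊤ : ℕ∞) H) (hφ : ContDiff ℝ (⊤ : ℕ∞) φ)
    (hφ0 : ∀ z, φ (0, z) = z)
    (hφflow : ∀ t z, deriv (fun s => φ (s, z)) t = hamVectorField d H t (φ (t, z)))
    (σ : ℝ → Ed × Ed) (hσ : ContDiff ℝ 1 σ) :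
    liouvilleIntegral d ((fun z => φ (1, z)) ∘ σ) - liouvilleIntegral d σ =
      symplecticAction d H (fun t => φ (t, σ 1)) - symplecticAction d H (fun t => φ (t, σ 0)) := by
  have hHd : Differentiable ℝ H := hH.differentiable (by simp)
  have hφd : Differentiable ℝ φ := hφ.differentiable (by simp)
  have hσd : Differentiable ℝ σ := hσ.differentiable (by simp)
  have hDφ : ContDiff ℝ 1 (fderiv ℝ φ) := hφ.fderiv_right (by norm_cast)
  have hDφd : Differentiable ℝ (fderiv ℝ φ) := hDφ.differentiable (by simp)
  have cσ' : Continuous (deriv σ) := hσ.continuous_deriv (by simp)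
  have cσ := hσ.continuous
  have cφ := hφ.continuous
  have cH := hH.continuous
  have cDφ := hDφ.continuous
  have cDDφ : Continuous (fderiv ℝ (fderiv ℝ φ)) := hDφ.continuous_fderiv (by simp)
  have symm : ∀ x v w, fderiv ℝ (fderiv ℝ φ) x v w = fderiv ℝ (fderiv ℝ φ) x w v := by
    intro x v w
    have : IsSymmSndFDerivAt ℝ φ x := hφ.contDiffAt.isSymmSndFDerivAt (by
      simp only [minSmoothness_of_isRCLikeNormedField]; norm_cast)
    exact this v w
  have lt : ∀ t (z : Ed × Ed), HasDerivAt (fun t => (t, z)) ((1 : ℝ), (0 : Ed × Ed)) t :=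
    fun t z => (hasDerivAt_id t).prodMk (hasDerivAt_const t z)
  have ls : ∀ t s, HasDerivAt (fun s => (t, σ s)) ((0 : ℝ), deriv σ s) s :=
    fun t s => (hasDerivAt_const s t).prodMk (hσd s).hasDerivAt
  have dt : ∀ t z, HasDerivAt (fun t => φ (t, z)) (fderiv ℝ φ (t, z) (1, 0)) t :=
    fun t z => (hφd (t, z)).hasFDerivAt.comp_hasDerivAt t (lt t z)
  have ds : ∀ t s, HasDerivAt (fun s => φ (t, σ s)) (fderiv ℝ φ (t, σ s) (0, deriv σ s)) s :=
    fun t s => (hφd (t, σ s)).hasFDerivAt.comp_hasDerivAt s (ls t s)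
  have fl : ∀ t z, hamVectorField d H t (φ (t, z)) = fderiv ℝ φ (t, z) (1, 0) :=
    fun t z => by rw [← hφflow, (dt t z).deriv]
  have dtt : ∀ t s, HasDerivAt (fun t => fderiv ℝ φ (t, σ s) (0, deriv σ s))
      (fderiv ℝ (fderiv ℝ φ) (t, σ s) (1, 0) (0, deriv σ s)) t := fun t s => by
    have := (hDφd (t, σ s)).hasFDerivAt.comp_hasDerivAt t (lt t (σ s))
    simpa using this.clm_apply (hasDerivAt_const t ((0 : ℝ), deriv σ s))
  have dss : ∀ t s, HasDerivAt (fun s => fderiv ℝ φ (t, σ s) (1, 0))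
      (fderiv ℝ (fderiv ℝ φ) (t, σ s) (1, 0) (0, deriv σ s)) s := fun t s => by
    have := (hDφd (t, σ s)).hasFDerivAt.comp_hasDerivAt s (ls t s)
    rw [symm]
    simpa using this.clm_apply (hasDerivAt_const s ((1 : ℝ), (0 : Ed × Ed)))
  have fst' : ∀ {f : ℝ → Ed × Ed} {f' x}, HasDerivAt f f' x →
      HasDerivAt (fun t => (f t).1) f'.1 x := fun h =>
    (ContinuousLinearMap.fst ℝ Ed Ed).hasFDerivAt.comp_hasDerivAt _ h
  have snd' : ∀ {f : ℝ → Ed × Ed} {f' x}, HasDerivAt f f' x →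
      HasDerivAt (fun t => (f t).2) f'.2 x := fun h =>
    (ContinuousLinearMap.snd ℝ Ed Ed).hasFDerivAt.comp_hasDerivAt _ h
  set h : ℝ → ℝ → ℝ := fun t s =>
    inner ℝ (φ (t, σ s)).2 (fderiv ℝ (fderiv ℝ φ) (t, σ s) (1, 0) (0, deriv σ s)).1 +
    inner ℝ (fderiv ℝ φ (t, σ s) (1, 0)).2 (fderiv ℝ φ (t, σ s) (0, deriv σ s)).1 with hh
  have ch : Continuous (Function.uncurry h) := by
    simp only [hh, Function.uncurry_def]; fun_prop
  set g : ℝ → ℝ → ℝ := fun t s =>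
    inner ℝ (φ (t, σ s)).2 (fderiv ℝ φ (t, σ s) (0, deriv σ s)).1 with hg
  have cg : Continuous (Function.uncurry g) := by
    simp only [hg, Function.uncurry_def]; fun_prop
  have dg : ∀ t s, HasDerivAt (fun t => g t s) (h t s) t := fun t s =>
    (snd' (dt t (σ s))).inner ℝ (fst' (dtt t s))
  set k : ℝ → ℝ → ℝ := fun t s =>
    inner ℝ (φ (t, σ s)).2 (fderiv ℝ φ (t, σ s) (1, 0)).1 - H (t, φ (t, σ s)) with hk
  have dk : ∀ t s, HasDerivAt (fun s => k t s) (h t s) s := fun t s => by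
    have h1 := (snd' (ds t s)).inner ℝ (fst' (dss t s))
    have h2 := (hHd (t, φ (t, σ s))).hasFDerivAt.comp_hasDerivAt s
      ((hasDerivAt_const s t).prodMk (ds t s))
    have h3 := h1.sub h2
    refine h3.congr_deriv ?_
    rw [aux_ham H hHd, fl, hh]
    simp only
    rw [real_inner_comm (fderiv ℝ φ (t, σ s) (1, 0)).1]
    ring
  have ct : ∀ s, Continuous (fun t => h t s) := fun s => ch.uncurry_right s
  have cs : ∀ t, Continuous (fun s => h t s) := fun t => ch.uncurry_left t
  have cgs : ∀ t, Continuous (fun s => g t s) := fun t => cg.uncurry_left t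
  have Ig : ∀ t, liouvilleIntegral d (fun s => φ (t, σ s)) = ∫ s in (0:ℝ)..1, g t s := by
    intro t
    unfold liouvilleIntegral
    refine intervalIntegral.integral_congr fun s _ => ?_
    simp only [hg]
    rw [(fst' (ds t s)).deriv]
  have Ik : ∀ s, symplecticAction d H (fun t => φ (t, σ s)) = ∫ t in (0:ℝ)..1, k t s := by
    intro s
    unfold symplecticAction liouvilleIntegral
    have c1 : Continuous fun t =>
      (inner ℝ (φ (t, σ s)).2 (fderiv ℝ φ (t, σ s) (1, 0)).1 : ℝ) := by fun_prop
    have c2 : Continuous fun t => H (t, φ (t, σ s)) := by fun_prop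
    rw [hk, intervalIntegral.integral_sub (c1.intervalIntegrable _ _) (c2.intervalIntegrable _ _)]
    congr 1
    refine intervalIntegral.integral_congr fun t _ => ?_
    simp only
    rw [(fst' (dt t (σ s))).deriv]
  have ck : ∀ s, Continuous fun t => k t s := fun s => by
    simp only [hk]; fun_prop
  have e0 : liouvilleIntegral d σ = liouvilleIntegral d (fun s => φ (0, σ s)) := by
    simp only [hφ0]
  have e1 : liouvilleIntegral d ((fun z => φ (1, z)) ∘ σ) =
    liouvilleIntegral d (fun s => φ (1, σ s)) := rfl
  rw [e0, e1, Ig, Ig, Ik, Ik,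
    ← intervalIntegral.integral_sub ((cgs _).intervalIntegrable _ _)
      ((cgs _).intervalIntegrable _ _),
    ← intervalIntegral.integral_sub ((ck _).intervalIntegrable _ _)
      ((ck _).intervalIntegrable _ _)]
  have a1 : ∀ s, g 1 s - g 0 s = ∫ t in (0:ℝ)..1, h t s := fun s =>
    (intervalIntegral.integral_eq_sub_of_hasDerivAt (fun t _ => dg t s)
      ((ct s).intervalIntegrable _ _)).symm
  have a2 : ∀ t, k t 1 - k t 0 = ∫ s in (0:ℝ)..1, h t s := fun t =>
    (intervalIntegral.integral_eq_sub_of_hasDerivAt (fun s _ => dk t s)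
      ((cs t).intervalIntegrable _ _)).symm
  simp only [a1, a2]
  exact aux_swap h ch

end helpers

/-- If `x₀`, `y₀` are fixed points of the time-1 map `ψ` of the flow of a 1-periodic
Hamiltonian `H`, with action difference `c` between the corresponding 1-periodic orbits,
then for every `n ≥ 1`, `I(ψⁿ∘σ) − I(σ) = n·c` for any C¹ curve `σ` from `x₀` to `y₀`. -/
theorem stmt_3 (d : ℕ)
    (H : ℝ × (EuclideanSpace ℝ (Fin d) × EuclideanSpace ℝ (Fin d)) → ℝ)
    (φ : ℝ × (EuclideanSpace ℝ (Fin d) × EuclideanSpace ℝ (Fin d)) →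
      EuclideanSpace ℝ (Fin d) × EuclideanSpace ℝ (Fin d))
    (hH : ContDiff ℝ (⊤ : ℕ∞) H) (hφ : ContDiff ℝ (⊤ : ℕ∞) φ)
    (hHper : ∀ t z, H (t + 1, z) = H (t, z))
    (hφ0 : ∀ z, φ (0, z) = z)
    (hφflow : ∀ t z, deriv (fun s => φ (s, z)) t = hamVectorField d H t (φ (t, z)))
    (hcocycle : ∀ t z, φ (t + 1, z) = φ (t, φ (1, z)))
    (x₀ y₀ : EuclideanSpace ℝ (Fin d) × EuclideanSpace ℝ (Fin d))
    (hx₀ : φ (1, x₀) = x₀) (hy₀ : φ (1, y₀) = y₀)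
    (c : ℝ)
    (hc : c = symplecticAction d H (fun t => φ (t, y₀)) -
      symplecticAction d H (fun t => φ (t, x₀)))
    (σ : ℝ → EuclideanSpace ℝ (Fin d) × EuclideanSpace ℝ (Fin d)) (hσ : ContDiff ℝ 1 σ)
    (hσ0 : σ 0 = x₀) (hσ1 : σ 1 = y₀) :
    ∀ n : ℕ, 1 ≤ n →
      liouvilleIntegral d ((fun z => φ (1, z))^[n] ∘ σ) - liouvilleIntegral d σ = n * c := by
  have hfx : ∀ n : ℕ, (fun z => φ (1, z))^[n] x₀ = x₀ := fun n => Function.iterate_fixed hx₀ n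
  have hfy : ∀ n : ℕ, (fun z => φ (1, z))^[n] y₀ = y₀ := fun n => Function.iterate_fixed hy₀ n
  have hψ : ContDiff ℝ 1 (fun z => φ (1, z)) :=
    (hφ.of_le (by norm_cast)).comp (contDiff_const.prodMk contDiff_id)
  have hψi : ∀ n : ℕ, ContDiff ℝ 1 ((fun z => φ (1, z))^[n]) := by
    intro n
    induction n with
    | zero => exact contDiff_id
    | succ n ih =>
      rw [Function.iterate_succ']
      exact hψ.comp ih
  have key : ∀ n : ℕ,
      liouvilleIntegral d ((fun z => φ (1, z))^[n] ∘ σ) - liouvilleIntegral d σ = n * c := by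
    intro n
    induction n with
    | zero => simp
    | succ n ih =>
      have h := aux_step H φ hH hφ hφ0 hφflow ((fun z => φ (1, z))^[n] ∘ σ)
        ((hψi n).comp hσ)
      simp only [Function.comp_apply, hσ0, hσ1, hfx, hfy] at h
      rw [Function.iterate_succ', Function.comp_assoc]
      push_cast
      rw [← hc] at h
      linarith
  exact fun n _ => key n
end

section
/- Let d ≥ 1, R > 0, c > 0, and let n ≥ 1 be an integer with n ≥ 4R². Let γ : [0,1] → ℝ^d × ℝ^d be a C¹ loop (γ(1) = γ(0)) whose base point satisfies ‖p(γ(0))‖ ≤ R, where p denotes the second component, and whose Liouville integral satisfies I(γ) = n·c. Then the length of γ satisfies ∫₀¹ ‖γ'(t)‖ dt ≥ min(c,1)·√n. -/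
open intervalIntegral

/-- A C¹ loop `γ` in `ℝ^d × ℝ^d` whose base point satisfies `‖p(γ(0))‖ ≤ R` and whose
Liouville integral equals `n·c`, where `n ≥ max(1, 4R²)`, has length at least
`min(c,1)·√n`. -/
theorem stmt_4 (d : ℕ) (hd : 1 ≤ d) (R c : ℝ) (hR : 0 < R) (hc : 0 < c)
    (n : ℕ) (hn : 1 ≤ n) (hn4 : 4 * R ^ 2 ≤ (n : ℝ))
    (γ : ℝ → EuclideanSpace ℝ (Fin d) × EuclideanSpace ℝ (Fin d)) (hγ : ContDiff ℝ 1 γ)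
    (hloop : γ 1 = γ 0)
    (hbase : ‖(γ 0).2‖ ≤ R)
    (hI : liouvilleIntegral d γ = n * c) :
    min c 1 * Real.sqrt n ≤ ∫ t in (0:ℝ)..1, ‖deriv γ t‖ := by
  have hdiff : Differentiable ℝ γ := hγ.differentiable (by norm_num)
  have hcd : Continuous (deriv γ) := hγ.continuous_deriv (by norm_num)
  have hcont : Continuous γ := hγ.continuous
  have hint : ∀ a b : ℝ, IntervalIntegrable (fun t => ‖deriv γ t‖) MeasureTheory.volume a b :=
    fun a b => hcd.norm.intervalIntegrable a b
  have hd1 : ∀ t, deriv (fun s => (γ s).1) t = (deriv γ t).1 := fun t =>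
    ((ContinuousLinearMap.fst ℝ (EuclideanSpace ℝ (Fin d))
      (EuclideanSpace ℝ (Fin d))).hasFDerivAt.comp_hasDerivAt t (hdiff t).hasDerivAt).deriv
  have hs0 : 0 < Real.sqrt n := Real.sqrt_pos.mpr (by exact_mod_cast hn)
  have hss : Real.sqrt n * Real.sqrt n = n := Real.mul_self_sqrt (by positivity)
  by_cases h : ∀ t ∈ Set.Icc (0:ℝ) 1, ‖(γ t).2‖ ≤ Real.sqrt n
  · have hle : liouvilleIntegral d γ ≤ ∫ t in (0:ℝ)..1, Real.sqrt n * ‖deriv γ t‖ := by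
      unfold liouvilleIntegral
      simp only [hd1]
      apply intervalIntegral.integral_mono_on (by norm_num)
      · apply Continuous.intervalIntegrable
        exact (continuous_snd.comp hcont).inner (continuous_fst.comp hcd)
      · exact (hint 0 1).const_mul _
      · intro t ht
        refine (real_inner_le_norm _ _).trans ?_
        exact mul_le_mul (h t ht) (norm_fst_le _) (norm_nonneg _) hs0.le
    rw [intervalIntegral.integral_const_mul, hI] at hle
    have hle2 : Real.sqrt n * (c * Real.sqrt n) ≤
        Real.sqrt n * ∫ t in (0:ℝ)..1, ‖deriv γ t‖ := by
      refine le_trans (le_of_eq ?_) hle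
      linear_combination c * hss
    have h2 := le_of_mul_le_mul_left hle2 hs0
    have h3 : min c 1 * Real.sqrt n ≤ c * Real.sqrt n :=
      mul_le_mul_of_nonneg_right (min_le_left _ _) hs0.le
    linarith
  · push Not at h
    obtain ⟨t, ht, hlt⟩ := h
    have key : ∀ a b : ℝ, a ≤ b → ‖(γ b).2 - (γ a).2‖ ≤ ∫ s in a..b, ‖deriv γ s‖ := by
      intro a b hab
      have h1 : ∫ s in a..b, deriv γ s = γ b - γ a :=
        intervalIntegral.integral_deriv_eq_sub (fun x _ => hdiff x)
          (hcd.intervalIntegrable a b)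
      have h2 := intervalIntegral.norm_integral_le_integral_norm
        (μ := MeasureTheory.volume) (f := deriv γ) hab
      rw [h1] at h2
      exact (norm_snd_le (γ b - γ a)).trans h2
    have k1 := key 0 t ht.1
    have k2 := key t 1 ht.2
    rw [hloop, norm_sub_rev] at k2
    have k3 := norm_sub_norm_le (γ t).2 (γ 0).2
    have k4 := intervalIntegral.integral_add_adjacent_intervals (hint 0 t) (hint t 1)
    have h3 : min c 1 * Real.sqrt n ≤ 1 * Real.sqrt n :=
      mul_le_mul_of_nonneg_right (min_le_right _ _) hs0.le
    have h4 : 2 * R ≤ Real.sqrt n := Real.le_sqrt_of_sq_le (by linarith [mul_pow 2 R 2])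
    linarith
end

section
/- Let H : ℝ × (ℝ^d × ℝ^d) → ℝ be a smooth Hamiltonian, 1-periodic in time, with H(t,z) = 0 for all t whenever z lies outside a compact set K. Let φ be a smooth flow of H satisfying the cocycle identity φ(t+1,z) = φ(t,φ(1,z)) and satisfying φ(t,z) = z for all t whenever z ∉ K, and let ψ = φ(1,·). Let x₀ and y₀ be fixed points of ψ whose 1-periodic orbits x(t) = φ(t,x₀), y(t) = φ(t,y₀), t ∈ [0,1], satisfy c := 𝒜_H(y) − 𝒜_H(x) > 0, and let σ : [0,1] → ℝ^d × ℝ^d be a C¹ curve with σ(0) = x₀ and σ(1) = y₀. Then there exist a > 0 and b ≥ 0 such that for every n ≥ 1 the length of ψⁿ∘σ satisfies ∫₀¹ ‖(ψⁿ∘σ)'(t)‖ dt ≥ a·n − b; in particular the length of ψⁿ∘σ grows at least linearly in n. -/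
open intervalIntegral

section Helpers

variable {E : Type*} [NormedAddCommGroup E] [InnerProductSpace ℝ E]

/-- The Lagrangian density along the flow. -/
noncomputable def lagr (H : ℝ × (E × E) → ℝ) (φ : ℝ × (E × E) → E × E) (x : ℝ × (E × E)) : ℝ :=
  @inner ℝ _ _ (φ x).2 (fderiv ℝ φ x (1, 0)).1 - H (x.1, φ x)

lemma lagr_contDiff (H : ℝ × (E × E) → ℝ) (φ : ℝ × (E × E) → E × E)
    (hH : ContDiff ℝ (⊤ : ℕ∞) H) (hφ : ContDiff ℝ (⊤ : ℕ∞) φ) :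
    ContDiff ℝ (⊤ : ℕ∞) (lagr H φ) := by
  have h1 : ContDiff ℝ (⊤ : ℕ∞) (fderiv ℝ φ) := hφ.fderiv_right (by simp)
  have h2 : ContDiff ℝ (⊤ : ℕ∞) (fun x => fderiv ℝ φ x (1, 0)) :=
    h1.clm_apply contDiff_const
  exact (ContDiff.inner ℝ hφ.snd h2.fst).sub (hH.comp (contDiff_fst.prodMk hφ))

lemma fderiv_ham [CompleteSpace E] (H : ℝ × (E × E) → ℝ) (hH : ContDiff ℝ (⊤ : ℕ∞) H)
    (t : ℝ) (z v : E × E) :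
    fderiv ℝ H (t, z) (0, v) =
      @inner ℝ _ _ (gradient (fun q => H (t, (q, z.2))) z.1) v.1 +
      @inner ℝ _ _ (gradient (fun p => H (t, (z.1, p))) z.2) v.2 := by
  have hd : HasFDerivAt H (fderiv ℝ H (t, z)) (t, z) :=
    (hH.differentiable (by simp)).differentiableAt.hasFDerivAt
  have h1 : HasFDerivAt (fun q => H (t, (q, z.2)))
      ((fderiv ℝ H (t, z)).comp ((0 : E →L[ℝ] ℝ).prod ((ContinuousLinearMap.id ℝ E).prod 0))) z.1 :=
    HasFDerivAt.comp (g := H) z.1 hd ((hasFDerivAt_const t z.1).prodMk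
      ((hasFDerivAt_id z.1).prodMk (hasFDerivAt_const z.2 z.1)))
  have h2 : HasFDerivAt (fun p => H (t, (z.1, p)))
      ((fderiv ℝ H (t, z)).comp ((0 : E →L[ℝ] ℝ).prod ((0 : E →L[ℝ] E).prod
        (ContinuousLinearMap.id ℝ E)))) z.2 :=
    HasFDerivAt.comp (g := H) z.2 hd ((hasFDerivAt_const t z.2).prodMk
      ((hasFDerivAt_const z.1 z.2).prodMk (hasFDerivAt_id z.2)))
  rw [gradient, gradient, InnerProductSpace.toDual_symm_apply,
    InnerProductSpace.toDual_symm_apply, h1.fderiv, h2.fderiv]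
  simp only [ContinuousLinearMap.comp_apply, ContinuousLinearMap.prod_apply, ← map_add]
  simp

lemma hasDerivAt_flow (φ : ℝ × (E × E) → E × E) (hφ : ContDiff ℝ (⊤ : ℕ∞) φ) (t : ℝ) (z : E × E) :
    HasDerivAt (fun s => φ (s, z)) (fderiv ℝ φ (t, z) (1, 0)) t := by
  have hd : HasFDerivAt φ (fderiv ℝ φ (t, z)) (t, z) :=
    (hφ.differentiable (by simp)).differentiableAt.hasFDerivAt
  exact HasFDerivAt.comp_hasDerivAt (l := φ) t hd ((hasDerivAt_id t).prodMk (hasDerivAt_const t z))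

lemma hasDerivAt_pfst {c : ℝ → E × E} {w : E × E} {t : ℝ} (h : HasDerivAt c w t) :
    HasDerivAt (fun s => (c s).1) w.1 t :=
  HasFDerivAt.comp_hasDerivAt (l := Prod.fst) t
    (ContinuousLinearMap.fst ℝ E E).hasFDerivAt h

lemma hasDerivAt_psnd {c : ℝ → E × E} {w : E × E} {t : ℝ} (h : HasDerivAt c w t) :
    HasDerivAt (fun s => (c s).2) w.2 t :=
  HasFDerivAt.comp_hasDerivAt (l := Prod.snd) t
    (ContinuousLinearMap.snd ℝ E E).hasFDerivAt h

/-- Key pointwise identity. -/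
lemma key [CompleteSpace E] (H : ℝ × (E × E) → ℝ) (φ : ℝ × (E × E) → E × E)
    (hH : ContDiff ℝ (⊤ : ℕ∞) H) (hφ : ContDiff ℝ (⊤ : ℕ∞) φ)
    (hflow : ∀ t z, deriv (fun s => φ (s, z)) t =
      (gradient (fun p => H (t, ((φ (t, z)).1, p))) (φ (t, z)).2,
        - gradient (fun q => H (t, (q, (φ (t, z)).2))) (φ (t, z)).1))
    (t : ℝ) (z v : E × E) :
    HasDerivAt (fun s => @inner ℝ _ _ (φ (s, z)).2 (fderiv ℝ φ (s, z) (0, v)).1)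
      (fderiv ℝ (lagr H φ) (t, z) (0, v)) t := by
  have h1 : ContDiff ℝ (⊤ : ℕ∞) (fderiv ℝ φ) := hφ.fderiv_right (by simp)
  have hdd : HasFDerivAt (fderiv ℝ φ) (fderiv ℝ (fderiv ℝ φ) (t, z)) (t, z) :=
    (h1.differentiable (by simp)).differentiableAt.hasFDerivAt
  have hd : HasFDerivAt φ (fderiv ℝ φ (t, z)) (t, z) :=
    (hφ.differentiable (by simp)).differentiableAt.hasFDerivAt
  have hHd : HasFDerivAt H (fderiv ℝ H (t, φ (t, z))) (t, φ (t, z)) :=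
    (hH.differentiable (by simp)).differentiableAt.hasFDerivAt
  have hsymm : fderiv ℝ (fderiv ℝ φ) (t, z) (1, 0) (0, v) =
      fderiv ℝ (fderiv ℝ φ) (t, z) (0, v) (1, 0) :=
    (hφ.contDiffAt.isSymmSndFDerivAt (by simp only [minSmoothness_of_isRCLikeNormedField]; exact WithTop.coe_le_coe.2 (le_top : (2 : ℕ∞) ≤ ⊤))) _ _
  have hfl := hasDerivAt_flow φ hφ t z
  have hfe := hflow t z
  rw [hfl.deriv] at hfe
  -- derivative in time
  have hA : HasDerivAt (fun s => fderiv ℝ φ (s, z) (0, v))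
      (fderiv ℝ (fderiv ℝ φ) (t, z) (1, 0) (0, v)) t := by
    have h := HasFDerivAt.comp_hasDerivAt (l := fderiv ℝ φ) t hdd
      ((hasDerivAt_id t).prodMk (hasDerivAt_const t z))
    simpa using h.clm_apply (hasDerivAt_const t ((0 : ℝ), v))
  have hleft := HasDerivAt.inner ℝ (hasDerivAt_psnd hfl) (hasDerivAt_pfst hA)
  -- derivative of the Lagrangian in direction `v` along a line
  have hline : HasDerivAt (fun s : ℝ => (t, z + s • v)) ((0 : ℝ), v) 0 := by
    refine (hasDerivAt_const _ _).prodMk ?_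
    simpa using ((hasDerivAt_id (0 : ℝ)).smul_const v).const_add z
  have hpt : (t, z) = (t, z + (0 : ℝ) • v) := by simp
  have hφl : HasDerivAt (fun s : ℝ => φ (t, z + s • v)) (fderiv ℝ φ (t, z) (0, v)) 0 :=
    HasFDerivAt.comp_hasDerivAt (l := φ) 0 (by rw [← hpt]; exact hd) hline
  have hAl : HasDerivAt (fun s : ℝ => fderiv ℝ φ (t, z + s • v) (1, 0))
      (fderiv ℝ (fderiv ℝ φ) (t, z) (0, v) (1, 0)) 0 := by
    have h := HasFDerivAt.comp_hasDerivAt (l := fderiv ℝ φ) 0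
      (by rw [← hpt]; exact hdd) hline
    simpa using h.clm_apply (hasDerivAt_const 0 ((1 : ℝ), (0 : E × E)))
  have hHl : HasDerivAt (fun s : ℝ => H (t, φ (t, z + s • v)))
      (fderiv ℝ H (t, φ (t, z)) (0, fderiv ℝ φ (t, z) (0, v))) 0 :=
    HasFDerivAt.comp_hasDerivAt (l := H) 0 (by rw [← hpt]; exact hHd)
      ((hasDerivAt_const _ _).prodMk hφl)
  have hLl : HasDerivAt (fun s : ℝ => lagr H φ (t, z + s • v))
      (fderiv ℝ (lagr H φ) (t, z) (0, v)) 0 := by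
    refine HasFDerivAt.comp_hasDerivAt (l := lagr H φ) 0 ?_ hline
    rw [← hpt]
    exact ((lagr_contDiff H φ hH hφ).differentiable (by simp)).differentiableAt.hasFDerivAt
  have hright := (HasDerivAt.inner ℝ (hasDerivAt_psnd hφl) (hasDerivAt_pfst hAl)).sub hHl
  have heq := hLl.unique hright
  rw [heq]
  refine hleft.congr_deriv ?_
  rw [fderiv_ham H hH, hsymm, hfe]
  simp only [zero_smul, add_zero]
  rw [hfe]
  simp only [inner_neg_left]
  rw [real_inner_comm (fderiv ℝ φ (t, z) (0, v)).2]
  ring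

lemma curve_deriv (φ : ℝ × (E × E) → E × E) (hφ : ContDiff ℝ (⊤ : ℕ∞) φ)
    (c : ℝ → E × E) (hc : ContDiff ℝ 1 c) (t s : ℝ) :
    HasDerivAt (fun s => φ (t, c s)) (fderiv ℝ φ (t, c s) (0, deriv c s)) s := by
  have hd : HasFDerivAt φ (fderiv ℝ φ (t, c s)) (t, c s) :=
    (hφ.differentiable (by simp)).differentiableAt.hasFDerivAt
  exact HasFDerivAt.comp_hasDerivAt (l := φ) s hd ((hasDerivAt_const _ _).prodMk
    (hc.differentiable (by simp)).differentiableAt.hasDerivAt)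

lemma step [CompleteSpace E] (H : ℝ × (E × E) → ℝ) (φ : ℝ × (E × E) → E × E)
    (hH : ContDiff ℝ (⊤ : ℕ∞) H) (hφ : ContDiff ℝ (⊤ : ℕ∞) φ)
    (hflow : ∀ t z, deriv (fun s => φ (s, z)) t =
      (gradient (fun p => H (t, ((φ (t, z)).1, p))) (φ (t, z)).2,
        - gradient (fun q => H (t, (q, (φ (t, z)).2))) (φ (t, z)).1))
    (hφ0 : ∀ z, φ (0, z) = z)
    (c : ℝ → E × E) (hc : ContDiff ℝ 1 c) :
    (∫ s in (0:ℝ)..1, @inner ℝ _ _ (φ (1, c s)).2 (deriv (fun s => (φ (1, c s)).1) s)) -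
      (∫ s in (0:ℝ)..1, @inner ℝ _ _ (c s).2 (deriv (fun s => (c s).1) s)) =
    (∫ t in (0:ℝ)..1, lagr H φ (t, c 1)) - ∫ t in (0:ℝ)..1, lagr H φ (t, c 0) := by
  have hL := lagr_contDiff H φ hH hφ
  have hLd : Continuous (fderiv ℝ (lagr H φ)) := hL.continuous_fderiv (by simp)
  have hφd : Continuous (fderiv ℝ φ) := hφ.continuous_fderiv (by simp)
  have hcder : Continuous (deriv c) := hc.continuous_deriv (by simp)
  have hcc : Continuous c := hc.continuous
  have hφc : Continuous φ := hφ.continuous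
  set F : ℝ → ℝ → ℝ := fun s t => fderiv ℝ (lagr H φ) (t, c s) (0, deriv c s) with hF
  have hFc : Continuous (Function.uncurry F) := by
    simp only [hF, Function.uncurry_def]
    fun_prop
  have e1 : ∀ s, ∫ t in (0:ℝ)..1, F s t =
      @inner ℝ _ _ (φ (1, c s)).2 (deriv (fun s => (φ (1, c s)).1) s) -
        @inner ℝ _ _ (c s).2 (deriv (fun s => (c s).1) s) := by
    intro s
    rw [integral_eq_sub_of_hasDerivAt
      (fun t _ => key H φ hH hφ hflow t (c s) (deriv c s))
      (Continuous.intervalIntegrable (by fun_prop) _ _)]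
    rw [(hasDerivAt_pfst (curve_deriv φ hφ c hc 1 s)).deriv, ← (hasDerivAt_pfst (curve_deriv φ hφ c hc 0 s)).deriv]
    simp only [hφ0]
  have e2 : ∀ t, ∫ s in (0:ℝ)..1, F s t = lagr H φ (t, c 1) - lagr H φ (t, c 0) := by
    intro t
    refine integral_eq_sub_of_hasDerivAt (f := fun s => lagr H φ (t, c s)) (fun s _ => ?_)
      (Continuous.intervalIntegrable (by fun_prop) _ _)
    exact HasFDerivAt.comp_hasDerivAt (l := lagr H φ) s
      (hL.differentiable (by simp)).differentiableAt.hasFDerivAt ((hasDerivAt_const _ _).prodMk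
      (hc.differentiable (by simp)).differentiableAt.hasDerivAt)
  have hsw : ∫ s in (0:ℝ)..1, ∫ t in (0:ℝ)..1, F s t = ∫ t in (0:ℝ)..1, ∫ s in (0:ℝ)..1, F s t := by
    apply MeasureTheory.intervalIntegral_intervalIntegral_swap
    refine (hFc.continuousOn.integrableOn_compact
      (isCompact_uIcc.prod isCompact_uIcc)).mono_set
      (Set.prod_mono Set.uIoc_subset_uIcc Set.uIoc_subset_uIcc)
  have hLc := hL.continuous
  simp only [e1, e2] at hsw
  rw [integral_sub, integral_sub] at hsw
  · exact hsw
  · exact Continuous.intervalIntegrable (by fun_prop) _ _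
  · exact Continuous.intervalIntegrable (by fun_prop) _ _
  · simp only [(hasDerivAt_pfst (curve_deriv φ hφ c hc 1 _)).deriv]
    exact Continuous.intervalIntegrable (by fun_prop) _ _
  · have : ∀ s, deriv (fun s => (c s).1) s = (deriv c s).1 := fun s =>
      (hasDerivAt_pfst ((hc.differentiable (by simp)).differentiableAt.hasDerivAt (x := s))).deriv
    simp only [this]
    exact Continuous.intervalIntegrable (by fun_prop) _ _

end Helpers

/-- Linear growth of the length of `ψⁿ∘σ` for the time-1 map `ψ` of a compactly supported
1-periodic Hamiltonian, when `σ` joins two fixed points of `ψ` whose 1-periodic orbits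
have positive action difference. -/
theorem stmt_5 (d : ℕ)
    (H : ℝ × (EuclideanSpace ℝ (Fin d) × EuclideanSpace ℝ (Fin d)) → ℝ)
    (φ : ℝ × (EuclideanSpace ℝ (Fin d) × EuclideanSpace ℝ (Fin d)) →
      EuclideanSpace ℝ (Fin d) × EuclideanSpace ℝ (Fin d))
    (hH : ContDiff ℝ (⊤ : ℕ∞) H) (hφ : ContDiff ℝ (⊤ : ℕ∞) φ)
    (hHper : ∀ t z, H (t + 1, z) = H (t, z))
    (K : Set (EuclideanSpace ℝ (Fin d) × EuclideanSpace ℝ (Fin d))) (hK : IsCompact K)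
    (hHsupp : ∀ t z, z ∉ K → H (t, z) = 0)
    (hφ0 : ∀ z, φ (0, z) = z)
    (hφflow : ∀ t z, deriv (fun s => φ (s, z)) t = hamVectorField d H t (φ (t, z)))
    (hcocycle : ∀ t z, φ (t + 1, z) = φ (t, φ (1, z)))
    (hφsupp : ∀ t z, z ∉ K → φ (t, z) = z)
    (x₀ y₀ : EuclideanSpace ℝ (Fin d) × EuclideanSpace ℝ (Fin d))
    (hx₀ : φ (1, x₀) = x₀) (hy₀ : φ (1, y₀) = y₀)
    (hgap : 0 < symplecticAction d H (fun t => φ (t, y₀)) -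
      symplecticAction d H (fun t => φ (t, x₀)))
    (σ : ℝ → EuclideanSpace ℝ (Fin d) × EuclideanSpace ℝ (Fin d)) (hσ : ContDiff ℝ 1 σ)
    (hσ0 : σ 0 = x₀) (hσ1 : σ 1 = y₀) :
    ∃ a > (0:ℝ), ∃ b ≥ (0:ℝ), ∀ n : ℕ, 1 ≤ n →
      a * n - b ≤ ∫ t in (0:ℝ)..1, ‖deriv ((fun z => φ (1, z))^[n] ∘ σ) t‖ := by
  have hφc : Continuous φ := hφ.continuous
  set ψ : EuclideanSpace ℝ (Fin d) × EuclideanSpace ℝ (Fin d) →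
    EuclideanSpace ℝ (Fin d) × EuclideanSpace ℝ (Fin d) := fun z => φ (1, z) with hψ
  have hψs : ContDiff ℝ 1 ψ := (hφ.of_le (by exact_mod_cast le_top)).comp
    (contDiff_const.prodMk contDiff_id)
  have hact : ∀ z, symplecticAction d H (fun t => φ (t, z)) =
      ∫ t in (0:ℝ)..1, lagr H φ (t, z) := by
    intro z
    have hφd : Continuous (fderiv ℝ φ) := hφ.continuous_fderiv (by simp)
    have hHc := hH.continuous
    unfold symplecticAction liouvilleIntegral lagr
    simp only [(hasDerivAt_pfst (hasDerivAt_flow φ hφ _ z)).deriv]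
    rw [integral_sub]
    · exact Continuous.intervalIntegrable (by fun_prop) _ _
    · exact Continuous.intervalIntegrable (by fun_prop) _ _
  set g := symplecticAction d H (fun t => φ (t, y₀)) -
      symplecticAction d H (fun t => φ (t, x₀)) with hg
  have hcs : ∀ n : ℕ, ContDiff ℝ 1 (ψ^[n] ∘ σ) := by
    intro n
    induction n with
    | zero => exact hσ
    | succ n ih =>
      rw [Function.iterate_succ']
      exact hψs.comp ih
  have hI : ∀ n : ℕ, liouvilleIntegral d (ψ^[n] ∘ σ) = liouvilleIntegral d σ + n * g := by
    intro n
    induction n with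
    | zero => simp
    | succ n ih =>
      have h := step H φ hH hφ hφflow hφ0 (ψ^[n] ∘ σ) (hcs n)
      have h0 : (ψ^[n] ∘ σ) 0 = x₀ := by
        simp only [Function.comp, hσ0]; exact Function.iterate_fixed hx₀ n
      have h1 : (ψ^[n] ∘ σ) 1 = y₀ := by
        simp only [Function.comp, hσ1]; exact Function.iterate_fixed hy₀ n
      rw [h0, h1, ← hact, ← hact, ← hg] at h
      have e : liouvilleIntegral d (ψ^[n+1] ∘ σ) - liouvilleIntegral d (ψ^[n] ∘ σ) = g := by
        rw [← h, Function.iterate_succ']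
        rfl
      push_cast
      linarith
  -- uniform bound
  have hψfix : ∀ z, z ∉ K → ψ z = z := fun z hz => hφsupp 1 z hz
  have himg : ∀ (n : ℕ) z, ψ^[n] z ∈ K ∪ ψ '' K ∪ {z} := by
    intro n z
    induction n with
    | zero => simp
    | succ n ih =>
      rw [Function.iterate_succ_apply']
      by_cases h : ψ^[n] z ∈ K
      · exact Or.inl (Or.inr ⟨_, h, rfl⟩)
      · rwa [hψfix _ h]
  have hcomp : IsCompact (K ∪ ψ '' K ∪ σ '' Set.Icc 0 1) :=
    (hK.union (hK.image hψs.continuous)).union (isCompact_Icc.image hσ.continuous)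
  obtain ⟨C, hCpos, hC⟩ := hcomp.isBounded.exists_pos_norm_le
  refine ⟨g / C, div_pos hgap hCpos, |liouvilleIntegral d σ| / C, by positivity, fun n _ => ?_⟩
  have hd : ∀ t, deriv (fun s => ((ψ^[n] ∘ σ) s).1) t = (deriv (ψ^[n] ∘ σ) t).1 := fun t =>
      (hasDerivAt_pfst (((hcs n).differentiable (by simp)).differentiableAt.hasDerivAt (x := t))).deriv
  have hdc : Continuous (deriv (ψ^[n] ∘ σ)) := (hcs n).continuous_deriv (by simp)
  have hcc := (hcs n).continuous
  have hle : liouvilleIntegral d (ψ^[n] ∘ σ) ≤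
      ∫ t in (0:ℝ)..1, C * ‖deriv (ψ^[n] ∘ σ) t‖ := by
    unfold liouvilleIntegral
    simp only [hd]
    refine integral_mono_on zero_le_one (Continuous.intervalIntegrable (by fun_prop) _ _)
      (Continuous.intervalIntegrable (by fun_prop) _ _) fun t ht => ?_
    refine (real_inner_le_norm _ _).trans ?_
    refine mul_le_mul ((norm_snd_le _).trans (hC _ ?_)) (norm_fst_le _) (norm_nonneg _) hCpos.le
    rcases himg n (σ t) with h | h
    · exact Or.inl h
    · exact Or.inr ⟨t, ht, by simpa using h.symm⟩
  rw [integral_const_mul, hI] at hle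
  have habs := neg_abs_le (liouvilleIntegral d σ)
  rw [div_mul_eq_mul_div, ← sub_div, div_le_iff₀ hCpos]
  linarith
end

section
/- Let H : ℝ × (ℝ^d × ℝ^d) → ℝ be a smooth Hamiltonian, 1-periodic in time, with a smooth flow φ satisfying the cocycle identity φ(t+1,z) = φ(t,φ(1,z)), and let ψ = φ(1,·). Let x₀ and y₀ be fixed points of ψ whose 1-periodic orbits x(t) = φ(t,x₀), y(t) = φ(t,y₀), t ∈ [0,1], satisfy c := 𝒜_H(y) − 𝒜_H(x) > 0, and let σ : [0,1] → ℝ^d × ℝ^d be a C¹ curve with σ(0) = x₀ and σ(1) = y₀. Then there exist a > 0 and a natural number N such that for every n ≥ N the length of ψⁿ∘σ satisfies ∫₀¹ ‖(ψⁿ∘σ)'(t)‖ dt ≥ a·√n. -/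
open intervalIntegral

section aux

open MeasureTheory

local notation "EV" d => EuclideanSpace ℝ (Fin d)

lemma aux_fst_deriv {A B : Type*} [NormedAddCommGroup A] [NormedSpace ℝ A]
    [NormedAddCommGroup B] [NormedSpace ℝ B] {F : ℝ × A → B} (hF : Differentiable ℝ F)
    (t : ℝ) (z : A) : HasDerivAt (fun s => F (s, z)) (fderiv ℝ F (t, z) (1, 0)) t := by
  have h1 : HasDerivAt (fun s : ℝ => (s, z)) ((1 : ℝ), (0 : A)) t :=
    (hasDerivAt_id t).prodMk (hasDerivAt_const t z)
  exact (hF (t, z)).hasFDerivAt.comp_hasDerivAt t h1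

lemma aux_snd_deriv {A B : Type*} [NormedAddCommGroup A] [NormedSpace ℝ A]
    [NormedAddCommGroup B] [NormedSpace ℝ B] {F : ℝ × A → B} (hF : Differentiable ℝ F)
    (t : ℝ) {γ : ℝ → A} {s : ℝ} {v : A} (hγ : HasDerivAt γ v s) :
    HasDerivAt (fun s => F (t, γ s)) (fderiv ℝ F (t, γ s) (0, v)) s := by
  have h1 : HasDerivAt (fun s : ℝ => (t, γ s)) ((0 : ℝ), v) s :=
    (hasDerivAt_const s t).prodMk hγ
  exact (hF (t, γ s)).hasFDerivAt.comp_hasDerivAt s h1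

/-- The Lagrangian density. -/
noncomputable def auxL (d : ℕ) (H : ℝ × ((EV d) × (EV d)) → ℝ)
    (φ : ℝ × ((EV d) × (EV d)) → (EV d) × (EV d)) (x : ℝ × ((EV d) × (EV d))) : ℝ :=
  @inner ℝ _ _ (φ x).2 (fderiv ℝ (fun y => (φ y).1) x (1, 0)) - H (x.1, φ x)

lemma aux_H (d : ℕ) (H : ℝ × ((EV d) × (EV d)) → ℝ) (hH : Differentiable ℝ H)
    (t : ℝ) (z : (EV d) × (EV d)) (a b : EV d) :
    fderiv ℝ H (t, z) (0, (a, b)) =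
      @inner ℝ _ _ (hamVectorField d H t z).1 b - @inner ℝ _ _ (hamVectorField d H t z).2 a := by
  have hp : HasFDerivAt (fun p => H (t, (z.1, p)))
      ((fderiv ℝ H (t, z)).comp ((0 : (EV d) →L[ℝ] ℝ).prod
        ((0 : (EV d) →L[ℝ] (EV d)).prod (ContinuousLinearMap.id ℝ _)))) z.2 := by
    have : HasFDerivAt (fun p : EV d => (t, (z.1, p))) ((0 : (EV d) →L[ℝ] ℝ).prod
        ((0 : (EV d) →L[ℝ] (EV d)).prod (ContinuousLinearMap.id ℝ _))) z.2 :=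
      (hasFDerivAt_const t _).prodMk ((hasFDerivAt_const z.1 _).prodMk (hasFDerivAt_id _))
    exact (hH (t, z)).hasFDerivAt.comp z.2 this
  have hq : HasFDerivAt (fun q => H (t, (q, z.2)))
      ((fderiv ℝ H (t, z)).comp ((0 : (EV d) →L[ℝ] ℝ).prod
        ((ContinuousLinearMap.id ℝ _).prod (0 : (EV d) →L[ℝ] (EV d))))) z.1 := by
    have : HasFDerivAt (fun q : EV d => (t, (q, z.2))) ((0 : (EV d) →L[ℝ] ℝ).prod
        ((ContinuousLinearMap.id ℝ _).prod (0 : (EV d) →L[ℝ] (EV d)))) z.1 :=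
      (hasFDerivAt_const t _).prodMk ((hasFDerivAt_id _).prodMk (hasFDerivAt_const z.2 _))
    exact (hH (t, z)).hasFDerivAt.comp z.1 this
  simp only [hamVectorField, gradient, hp.fderiv, hq.fderiv, inner_neg_left,
    InnerProductSpace.toDual_symm_apply, sub_neg_eq_add]
  simp only [ContinuousLinearMap.comp_apply, ContinuousLinearMap.prod_apply,
    ContinuousLinearMap.zero_apply, ContinuousLinearMap.id_apply]
  rw [← map_add]
  simp

lemma aux_pointwise (d : ℕ) (H : ℝ × ((EV d) × (EV d)) → ℝ)
    (φ : ℝ × ((EV d) × (EV d)) → (EV d) × (EV d))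
    (hH : ContDiff ℝ (⊤ : ℕ∞) H) (hφ : ContDiff ℝ (⊤ : ℕ∞) φ)
    (hφflow : ∀ t z, deriv (fun s => φ (s, z)) t = hamVectorField d H t (φ (t, z)))
    (t : ℝ) (z v : (EV d) × (EV d)) :
    HasDerivAt (fun r => @inner ℝ _ _ (φ (r, z)).2 (fderiv ℝ (fun y => (φ y).1) (r, z) (0, v)))
      (fderiv ℝ (auxL d H φ) (t, z) (0, v)) t := by
  have hQ : ContDiff ℝ (⊤ : ℕ∞) (fun y => (φ y).1) := contDiff_fst.comp hφ
  have hP : ContDiff ℝ (⊤ : ℕ∞) (fun y => (φ y).2) := contDiff_snd.comp hφ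
  have hQd : Differentiable ℝ (fun y => (φ y).1) := hQ.differentiable (by simp)
  have hPd : Differentiable ℝ (fun y => (φ y).2) := hP.differentiable (by simp)
  have hHd : Differentiable ℝ H := hH.differentiable (by simp)
  have hφd : Differentiable ℝ φ := hφ.differentiable (by simp)
  have hDQ : ContDiff ℝ (⊤ : ℕ∞) (fderiv ℝ (fun y => (φ y).1)) :=
    hQ.fderiv_right (m := (⊤ : ℕ∞)) (by simp)
  have hDQd : Differentiable ℝ (fderiv ℝ (fun y => (φ y).1)) := hDQ.differentiable (by simp)
  have hsym : IsSymmSndFDerivAt ℝ (fun y => (φ y).1) (t, z) :=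
    hQ.contDiffAt.isSymmSndFDerivAt (by simp only [minSmoothness_of_isRCLikeNormedField]; exact WithTop.coe_le_coe.mpr le_top)
  have hflow : fderiv ℝ φ (t, z) (1, 0) = hamVectorField d H t (φ (t, z)) := by
    rw [← hφflow]; exact (aux_fst_deriv hφd t z).deriv.symm
  have hf1 : fderiv ℝ (fun y => (φ y).1) (t, z) (1, 0) = (hamVectorField d H t (φ (t, z))).1 := by
    rw [← hflow, ((hφd (t, z)).hasFDerivAt.fst).fderiv]; rfl
  have hf2 : fderiv ℝ (fun y => (φ y).2) (t, z) (1, 0) = (hamVectorField d H t (φ (t, z))).2 := by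
    rw [← hflow, ((hφd (t, z)).hasFDerivAt.snd).fderiv]; rfl
  have hM := (aux_fst_deriv hPd t z).inner ℝ
    ((aux_fst_deriv hDQd t z).clm_apply (hasDerivAt_const t ((0 : ℝ), v)))
  refine hM.congr_deriv (Eq.symm ?_)
  have hline : HasDerivAt (fun s : ℝ => z + s • v) v 0 := by
    simpa using ((hasDerivAt_id (0:ℝ)).smul_const v).const_add z
  have hLd : Differentiable ℝ (auxL d H φ) := by
    unfold auxL
    exact (hPd.inner ℝ (hDQd.clm_apply (differentiable_const _))).sub
      (hHd.comp (differentiable_fst.prodMk hφd))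
  have e1 := aux_snd_deriv hLd t hline
  have h1 := aux_snd_deriv hPd t hline
  have h2 := (aux_snd_deriv hDQd t hline).clm_apply (hasDerivAt_const 0 ((1 : ℝ), (0 : (EV d) × (EV d))))
  have h3 := aux_snd_deriv hφd t hline
  have h4 := aux_snd_deriv hHd t h3
  have e2 := (h1.inner ℝ h2).sub h4
  have e := e1.unique e2
  simp only [zero_smul, add_zero] at e
  rw [e]
  have hv : fderiv ℝ φ (t, z) (0, v) = (fderiv ℝ (fun y => (φ y).1) (t, z) (0, v),
      fderiv ℝ (fun y => (φ y).2) (t, z) (0, v)) := by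
    rw [((hφd (t, z)).hasFDerivAt.fst).fderiv, ((hφd (t, z)).hasFDerivAt.snd).fderiv]; rfl
  rw [hv, aux_H d H hHd, hf1, hf2, hsym.eq (0, v) (1, 0)]
  simp only [map_zero, add_zero, zero_add]
  rw [real_inner_comm (fderiv ℝ (fun y => (φ y).2) (t, z) (0, v))]
  ring

lemma aux_key (d : ℕ) (H : ℝ × ((EV d) × (EV d)) → ℝ)
    (φ : ℝ × ((EV d) × (EV d)) → (EV d) × (EV d))
    (hH : ContDiff ℝ (⊤ : ℕ∞) H) (hφ : ContDiff ℝ (⊤ : ℕ∞) φ)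
    (hφ0 : ∀ z, φ (0, z) = z)
    (hφflow : ∀ t z, deriv (fun s => φ (s, z)) t = hamVectorField d H t (φ (t, z)))
    (γ : ℝ → (EV d) × (EV d)) (hγ : ContDiff ℝ 1 γ) :
    liouvilleIntegral d (fun s => φ (1, γ s)) - liouvilleIntegral d γ =
      symplecticAction d H (fun t => φ (t, γ 1)) - symplecticAction d H (fun t => φ (t, γ 0)) := by
  have hQ : ContDiff ℝ (⊤ : ℕ∞) (fun y => (φ y).1) := contDiff_fst.comp hφ
  have hP : ContDiff ℝ (⊤ : ℕ∞) (fun y => (φ y).2) := contDiff_snd.comp hφ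
  have hQd : Differentiable ℝ (fun y => (φ y).1) := hQ.differentiable (by simp)
  have hDQ : ContDiff ℝ (⊤ : ℕ∞) (fderiv ℝ (fun y => (φ y).1)) :=
    hQ.fderiv_right (m := (⊤ : ℕ∞)) (by simp)
  have hL : ContDiff ℝ (⊤ : ℕ∞) (auxL d H φ) := by
    unfold auxL
    exact (hP.inner ℝ (hDQ.clm_apply contDiff_const)).sub
      (hH.comp (contDiff_fst.prodMk hφ))
  have hLd : Differentiable ℝ (auxL d H φ) := hL.differentiable (by simp)
  have hDL : Continuous (fderiv ℝ (auxL d H φ)) := hL.continuous_fderiv (by simp)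
  have hγd : ∀ s, HasDerivAt γ (deriv γ s) s := fun s =>
    (hγ.differentiable (by simp) s).hasDerivAt
  have hγc : Continuous (deriv γ) := hγ.continuous_deriv (by simp)
  have hγ0 : Continuous γ := hγ.continuous
  have hDQc := hDQ.continuous
  have hPc := hP.continuous
  have hφc := hφ.continuous
  have hHc := hH.continuous
  -- action as an integral of the density
  have hact : ∀ z, symplecticAction d H (fun t => φ (t, z)) =
      ∫ t in (0:ℝ)..1, auxL d H φ (t, z) := by
    intro z
    unfold symplecticAction liouvilleIntegral auxL
    rw [← intervalIntegral.integral_sub]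
    · refine intervalIntegral.integral_congr fun t _ => ?_
      simp only
      rw [(aux_fst_deriv hQd t z).deriv]
    · have : (fun t => @inner ℝ _ _ (φ (t, z)).2 (deriv (fun s => (φ (s, z)).1) t)) =
          fun t => @inner ℝ _ _ (φ (t, z)).2 (fderiv ℝ (fun y => (φ y).1) (t, z) (1, 0)) := by
        funext t; rw [(aux_fst_deriv hQd t z).deriv]
      rw [this]
      apply Continuous.intervalIntegrable
      exact (hPc.comp (by fun_prop : Continuous fun t : ℝ => (t, z))).inner
        ((hDQc.comp (by fun_prop : Continuous fun t : ℝ => (t, z))).clm_apply continuous_const)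
    · apply Continuous.intervalIntegrable
      fun_prop
  have hgc : Continuous (fun x : ℝ × ℝ => fderiv ℝ (auxL d H φ) (x.1, γ x.2) (0, deriv γ x.2)) :=
    (hDL.comp (by fun_prop : Continuous fun x : ℝ × ℝ => (x.1, γ x.2))).clm_apply (by fun_prop)
  have hI : ∀ t : ℝ, liouvilleIntegral d (fun s => φ (t, γ s)) = ∫ s in (0:ℝ)..1,
      @inner ℝ _ _ (φ (t, γ s)).2 (fderiv ℝ (fun y => (φ y).1) (t, γ s) (0, deriv γ s)) := by
    intro t
    unfold liouvilleIntegral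
    refine intervalIntegral.integral_congr fun s _ => ?_
    simp only
    rw [(aux_snd_deriv hQd t (hγd s)).deriv]
  have hMint : ∀ t : ℝ, IntervalIntegrable (fun s =>
      @inner ℝ _ _ (φ (t, γ s)).2 (fderiv ℝ (fun y => (φ y).1) (t, γ s) (0, deriv γ s)))
      volume 0 1 := by
    intro t
    apply Continuous.intervalIntegrable
    exact (hPc.comp (by fun_prop : Continuous fun s : ℝ => (t, γ s))).inner
        ((hDQc.comp (by fun_prop : Continuous fun s : ℝ => (t, γ s))).clm_apply (by fun_prop))
  have hI0 : liouvilleIntegral d γ = liouvilleIntegral d (fun s => φ (0, γ s)) := by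
    simp only [hφ0]
  rw [hI0, hI, hI, hact, hact, ← intervalIntegral.integral_sub (hMint 1) (hMint 0),
    ← intervalIntegral.integral_sub]
  · have A : ∀ s, @inner ℝ _ _ (φ (1, γ s)).2 (fderiv ℝ (fun y => (φ y).1) (1, γ s) (0, deriv γ s))
        - @inner ℝ _ _ (φ (0, γ s)).2 (fderiv ℝ (fun y => (φ y).1) (0, γ s) (0, deriv γ s)) =
        ∫ t in (0:ℝ)..1, fderiv ℝ (auxL d H φ) (t, γ s) (0, deriv γ s) := by
      intro s
      rw [intervalIntegral.integral_eq_sub_of_hasDerivAt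
        (fun t _ => aux_pointwise d H φ hH hφ hφflow t (γ s) (deriv γ s))]
      apply Continuous.intervalIntegrable
      exact hgc.comp (by fun_prop : Continuous fun t : ℝ => (t, s))
    have B : ∀ t, auxL d H φ (t, γ 1) - auxL d H φ (t, γ 0) =
        ∫ s in (0:ℝ)..1, fderiv ℝ (auxL d H φ) (t, γ s) (0, deriv γ s) := by
      intro t
      rw [intervalIntegral.integral_eq_sub_of_hasDerivAt
        (fun s _ => aux_snd_deriv hLd t (hγd s))]
      apply Continuous.intervalIntegrable
      exact hgc.comp (by fun_prop : Continuous fun s : ℝ => (t, s))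
    simp only [A, B]
    simp only [intervalIntegral.integral_of_le zero_le_one]
    apply integral_integral_swap (f := fun s t => fderiv ℝ (auxL d H φ) (t, γ s) (0, deriv γ s))
    rw [Measure.prod_restrict]
    have hk : IntegrableOn (fun x : ℝ × ℝ => fderiv ℝ (auxL d H φ) (x.2, γ x.1) (0, deriv γ x.1))
        (Set.Icc 0 1 ×ˢ Set.Icc 0 1) (volume.prod volume) :=
      (hgc.comp continuous_swap).continuousOn.integrableOn_compact (isCompact_Icc.prod isCompact_Icc)
    exact hk.mono_set (Set.prod_mono Set.Ioc_subset_Icc_self Set.Ioc_subset_Icc_self)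
  · apply Continuous.intervalIntegrable
    exact hL.continuous.comp (by fun_prop)
  · apply Continuous.intervalIntegrable
    exact hL.continuous.comp (by fun_prop)

/-- The Liouville integral is bounded quadratically by the length. -/
lemma aux_bound (d : ℕ) (γ : ℝ → (EV d) × (EV d)) (hγ : ContDiff ℝ 1 γ) :
    liouvilleIntegral d γ ≤ (‖γ 0‖ + ∫ t in (0:ℝ)..1, ‖deriv γ t‖) *
      ∫ t in (0:ℝ)..1, ‖deriv γ t‖ := by
  have hγd : ∀ s, HasDerivAt γ (deriv γ s) s := fun s =>
    (hγ.differentiable (by simp) s).hasDerivAt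
  have hγc : Continuous (deriv γ) := hγ.continuous_deriv (by simp)
  have hγ0 : Continuous γ := hγ.continuous
  have hfst : ∀ t, deriv (fun s => (γ s).1) t = (deriv γ t).1 := by
    intro t
    exact (((ContinuousLinearMap.fst ℝ (EV d) (EV d)).hasFDerivAt).comp_hasDerivAt t (hγd t)).deriv
  have hb : ∀ t ∈ Set.Icc (0:ℝ) 1, ‖γ t‖ ≤ ‖γ 0‖ + ∫ t in (0:ℝ)..1, ‖deriv γ t‖ := by
    intro t ht
    have h1 : ∫ s in (0:ℝ)..t, deriv γ s = γ t - γ 0 :=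
      intervalIntegral.integral_eq_sub_of_hasDerivAt (fun s _ => hγd s)
        (hγc.intervalIntegrable _ _)
    have h2 : ‖∫ s in (0:ℝ)..t, deriv γ s‖ ≤ ∫ s in (0:ℝ)..t, ‖deriv γ s‖ :=
      intervalIntegral.norm_integral_le_integral_norm ht.1
    have h3 : ∫ s in (0:ℝ)..t, ‖deriv γ s‖ ≤ ∫ s in (0:ℝ)..1, ‖deriv γ s‖ :=
      intervalIntegral.integral_mono_interval le_rfl ht.1 ht.2
        (Filter.Eventually.of_forall fun s => norm_nonneg _) (hγc.norm.intervalIntegrable _ _)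
    rw [h1] at h2
    have h4 : ‖γ t‖ ≤ ‖γ 0‖ + ‖γ t - γ 0‖ := by
      simpa using norm_add_le (γ 0) (γ t - γ 0)
    linarith
  unfold liouvilleIntegral
  rw [← intervalIntegral.integral_const_mul]
  simp only [hfst]
  apply intervalIntegral.integral_mono_on zero_le_one
  · apply Continuous.intervalIntegrable
    exact (continuous_snd.comp hγ0).inner (continuous_fst.comp hγc)
  · exact (continuous_const.mul hγc.norm).intervalIntegrable _ _
  · intro t ht
    calc _ ≤ ‖(γ t).2‖ * ‖(deriv γ t).1‖ := real_inner_le_norm _ _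
      _ ≤ _ := mul_le_mul ((norm_snd_le _).trans (hb t ht)) (norm_fst_le _) (norm_nonneg _)
        ((norm_nonneg _).trans (hb t ht))

end aux

/-- `√n`-growth of the length of `ψⁿ∘σ` for the time-1 map `ψ` of a 1-periodic Hamiltonian,
when `σ` joins two fixed points of `ψ` whose 1-periodic orbits have positive action
difference. -/
theorem stmt_6 (d : ℕ)
    (H : ℝ × (EuclideanSpace ℝ (Fin d) × EuclideanSpace ℝ (Fin d)) → ℝ)
    (φ : ℝ × (EuclideanSpace ℝ (Fin d) × EuclideanSpace ℝ (Fin d)) →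
      EuclideanSpace ℝ (Fin d) × EuclideanSpace ℝ (Fin d))
    (hH : ContDiff ℝ (⊤ : ℕ∞) H) (hφ : ContDiff ℝ (⊤ : ℕ∞) φ)
    (hHper : ∀ t z, H (t + 1, z) = H (t, z))
    (hφ0 : ∀ z, φ (0, z) = z)
    (hφflow : ∀ t z, deriv (fun s => φ (s, z)) t = hamVectorField d H t (φ (t, z)))
    (hcocycle : ∀ t z, φ (t + 1, z) = φ (t, φ (1, z)))
    (x₀ y₀ : EuclideanSpace ℝ (Fin d) × EuclideanSpace ℝ (Fin d))
    (hx₀ : φ (1, x₀) = x₀) (hy₀ : φ (1, y₀) = y₀)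
    (hgap : 0 < symplecticAction d H (fun t => φ (t, y₀)) -
      symplecticAction d H (fun t => φ (t, x₀)))
    (σ : ℝ → EuclideanSpace ℝ (Fin d) × EuclideanSpace ℝ (Fin d)) (hσ : ContDiff ℝ 1 σ)
    (hσ0 : σ 0 = x₀) (hσ1 : σ 1 = y₀) :
    ∃ a > (0:ℝ), ∃ N : ℕ, ∀ n : ℕ, N ≤ n →
      a * Real.sqrt n ≤ ∫ t in (0:ℝ)..1, ‖deriv ((fun z => φ (1, z))^[n] ∘ σ) t‖ := by
  set c := symplecticAction d H (fun t => φ (t, y₀)) -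
      symplecticAction d H (fun t => φ (t, x₀)) with hc
  set ψ := (fun z => φ (1, z)) with hψ
  have hψC : ContDiff ℝ 1 ψ := (hφ.of_le (by exact_mod_cast le_top)).comp (by fun_prop)
  have hC : ∀ n : ℕ, ContDiff ℝ 1 (ψ^[n] ∘ σ) := by
    intro n
    induction n with
    | zero => simpa using hσ
    | succ k ih =>
      rw [Function.iterate_succ', Function.comp_assoc]
      exact hψC.comp ih
  have h0 : ∀ n : ℕ, (ψ^[n] ∘ σ) 0 = x₀ := fun n => by
    simp only [Function.comp, hσ0]; exact Function.iterate_fixed hx₀ n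
  have h1 : ∀ n : ℕ, (ψ^[n] ∘ σ) 1 = y₀ := fun n => by
    simp only [Function.comp, hσ1]; exact Function.iterate_fixed hy₀ n
  have hI : ∀ n : ℕ, liouvilleIntegral d (ψ^[n] ∘ σ) = liouvilleIntegral d σ + n * c := by
    intro n
    induction n with
    | zero => simp
    | succ k ih =>
      have hk := aux_key d H φ hH hφ hφ0 hφflow _ (hC k)
      rw [h0, h1, ← hc, ih] at hk
      have : (ψ^[k+1] ∘ σ) = fun s => φ (1, (ψ^[k] ∘ σ) s) := by
        funext s; simp only [Function.comp, Function.iterate_succ_apply', hψ]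
      rw [this]; push_cast; linarith
  have hP : 0 ≤ ‖x₀‖ := norm_nonneg _
  obtain ⟨N, hN⟩ := exists_nat_gt (2 * |liouvilleIntegral d σ| / c)
  refine ⟨min 1 (c / (2 * (‖x₀‖ + 1))), by positivity, N + 1, fun n hn => ?_⟩
  set a := min 1 (c / (2 * (‖x₀‖ + 1))) with ha
  have ha0 : 0 < a := by positivity
  have ha1 : a ≤ 1 := min_le_left _ _
  have ha2 : a * (‖x₀‖ + 1) ≤ c / 2 := by
    have : a ≤ c / (2 * (‖x₀‖ + 1)) := min_le_right _ _
    rw [le_div_iff₀ (by positivity)] at this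
    linarith
  have hb := aux_bound d _ (hC n)
  rw [hI, h0] at hb
  set L := ∫ t in (0:ℝ)..1, ‖deriv (ψ^[n] ∘ σ) t‖ with hL
  have hL0 : 0 ≤ L := intervalIntegral.integral_nonneg zero_le_one fun t _ => norm_nonneg _
  by_contra! hlt
  have hn1 : (N : ℝ) + 1 ≤ n := by exact_mod_cast hn
  have hNn : (0:ℝ) ≤ N := Nat.cast_nonneg N
  have hs1 : 1 ≤ Real.sqrt n := Real.one_le_sqrt.mpr (by linarith)
  have hsq : Real.sqrt n * Real.sqrt n = n := Real.mul_self_sqrt (by linarith)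
  have hn2 : 2 * |liouvilleIntegral d σ| < n * c := by
    rw [div_lt_iff₀ hgap] at hN
    nlinarith
  have hI0 := neg_abs_le (liouvilleIntegral d σ)
  have u1 : (‖x₀‖ + L) * L ≤ (‖x₀‖ + a * Real.sqrt n) * (a * Real.sqrt n) := by
    gcongr
  have u2 : (‖x₀‖ + a * Real.sqrt n) * (a * Real.sqrt n) ≤
      ((‖x₀‖ + 1) * Real.sqrt n) * (a * Real.sqrt n) := by
    apply mul_le_mul_of_nonneg_right _ (by positivity)
    nlinarith
  have u3 : ((‖x₀‖ + 1) * Real.sqrt n) * (a * Real.sqrt n) = a * (‖x₀‖ + 1) * n := by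
    linear_combination (a * (‖x₀‖ + 1)) * hsq
  have u4 : a * (‖x₀‖ + 1) * n ≤ c / 2 * n := mul_le_mul_of_nonneg_right ha2 (by linarith)
  linarith
end

section
/- Let f : ℝ → ℝ be twice continuously differentiable and let M ≥ 0 satisfy |f''(r)| ≤ M for all r ∈ [0,1]. For an integer m ≥ 0 define φ_m : ℂ^N → ℂ^N by φ_m(x) = e^{2 f'(‖x‖²) m i}·x. Then φ_m is differentiable, and for every x with ‖x‖ ≤ 1 the operator norm of its real Fréchet derivative satisfies ‖Dφ_m(x)‖ ≤ 1 + 4·M·m. -/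
/-- The map `φ_m(x) = e^{2 f'(‖x‖²) m i}·x` on `ℂ^N`. -/
noncomputable def twistFlow (N : ℕ) (f : ℝ → ℝ) (t : ℝ) (x : EuclideanSpace ℂ (Fin N)) :
    EuclideanSpace ℂ (Fin N) :=
  Complex.exp (((2 * deriv f (‖x‖ ^ 2) * t : ℝ) : ℂ) * Complex.I) • x

theorem normSq_hasFDerivAt (N : ℕ) (x : EuclideanSpace ℂ (Fin N)) :
    ∃ L : EuclideanSpace ℂ (Fin N) →L[ℝ] ℝ,
      HasFDerivAt (fun y : EuclideanSpace ℂ (Fin N) => ‖y‖ ^ 2) L x ∧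
      ∀ h, |L h| ≤ 2 * ‖x‖ * ‖h‖ := by
  have h1 := (hasFDerivAt_id (𝕜 := ℝ) x).inner ℂ (hasFDerivAt_id (𝕜 := ℝ) x)
  have h2 := Complex.reCLM.hasFDerivAt.comp x h1
  refine ⟨_, h2.congr_of_eventuallyEq (Filter.Eventually.of_forall fun y => ?_), fun h => ?_⟩
  · simp only [Function.comp, id, Complex.reCLM_apply]
    exact norm_sq_eq_re_inner (𝕜 := ℂ) y
  · simp only [ContinuousLinearMap.comp_apply, Complex.reCLM_apply]
    refine (Complex.abs_re_le_norm _).trans ?_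
    have a := norm_inner_le_norm (𝕜 := ℂ) x h
    have b := norm_inner_le_norm (𝕜 := ℂ) h x
    refine (norm_add_le (inner ℂ x h) (inner ℂ h x)).trans ?_
    linarith

theorem twistFlow_hasFDerivAt (N : ℕ) (f : ℝ → ℝ) (hf : ContDiff ℝ 2 f) (m : ℕ)
    (x : EuclideanSpace ℂ (Fin N)) :
    ∃ D : EuclideanSpace ℂ (Fin N) →L[ℝ] EuclideanSpace ℂ (Fin N),
      HasFDerivAt (twistFlow N f m) D x ∧
      ∀ h, ‖D h‖ ≤ ‖h‖ + |deriv (deriv f) (‖x‖ ^ 2)| * (4 * m) * ‖x‖ ^ 2 * ‖h‖ := by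
  obtain ⟨L, hL, hb⟩ := normSq_hasFDerivAt N x
  have hd : Differentiable ℝ (deriv f) :=
    ((contDiff_succ_iff_deriv (n := 1)).1 hf).2.2.differentiable (by norm_num)
  have h1 := (((hd (‖x‖ ^ 2)).hasDerivAt.comp_hasFDerivAt x hL).const_mul 2).mul_const (m : ℝ)
  have h2 := ((Complex.ofRealCLM.hasFDerivAt.comp x h1).mul_const Complex.I).cexp
  have h3 := h2.smul (hasFDerivAt_id (𝕜 := ℝ) x)
  refine ⟨_, h3, fun h => ?_⟩
  have e1 : ∀ r : ℝ, ‖Complex.exp ((r : ℂ) * Complex.I)‖ = 1 := Complex.norm_exp_ofReal_mul_I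
  refine (norm_add_le _ _).trans (add_le_add ?_ ?_)
  · simp [norm_smul, -Complex.ofReal_mul, e1]
  · simp [norm_smul, -Complex.ofReal_mul, e1]
    have := hb h
    have hm : (0:ℝ) ≤ m := Nat.cast_nonneg m
    calc _ = (m * (2 * |deriv (deriv f) (‖x‖ ^ 2)|) * ‖x‖) * |L h| := by ring
      _ ≤ (m * (2 * |deriv (deriv f) (‖x‖ ^ 2)|) * ‖x‖) * (2 * ‖x‖ * ‖h‖) := by gcongr
      _ = _ := by ring

theorem stmt_9 (N : ℕ) (f : ℝ → ℝ) (hf : ContDiff ℝ 2 f) (M : ℝ) (hM : 0 ≤ M)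
    (hf'' : ∀ r ∈ Set.Icc (0:ℝ) 1, |deriv (deriv f) r| ≤ M) (m : ℕ) :
    Differentiable ℝ (twistFlow N f m) ∧
    ∀ x : EuclideanSpace ℂ (Fin N), ‖x‖ ≤ 1 →
      ‖fderiv ℝ (twistFlow N f m) x‖ ≤ 1 + 4 * M * m := by
  constructor
  · intro x
    obtain ⟨D, hD, -⟩ := twistFlow_hasFDerivAt N f hf m x
    exact hD.differentiableAt
  · intro x hx
    obtain ⟨D, hD, hb⟩ := twistFlow_hasFDerivAt N f hf m x
    rw [hD.fderiv]
    refine D.opNorm_le_bound (by positivity) fun h => (hb h).trans ?_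
    have hx2 : ‖x‖ ^ 2 ≤ 1 := pow_le_one₀ (norm_nonneg x) hx
    have hM' := hf'' (‖x‖ ^ 2) ⟨by positivity, hx2⟩
    have : |deriv (deriv f) (‖x‖ ^ 2)| * (4 * m) * ‖x‖ ^ 2 * ‖h‖ ≤ M * (4 * m) * 1 * ‖h‖ := by
      gcongr
    linarith
end

section
/- Let f : ℝ → ℝ be twice continuously differentiable, let e₁ be the first standard basis vector of ℂ^N, let b > 0, and for an integer m ≥ 0 let c_m : [0,b] → ℂ^N be the curve c_m(t) = e^{2 f'(t²) m i}·(t·e₁). Then c_m is differentiable with ‖c_m'(t)‖ = √(1 + 16 m² f''(t²)² t⁴) for every t ∈ [0,b], and consequently its length satisfies ∫₀^b ‖c_m'(t)‖ dt ≥ 4m·∫₀^b |f''(t²)| t² dt. In particular, if f'' does not vanish identically on (0,b²), the length of c_m grows at least linearly in m. -/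
/-- The curve `c_m(t) = e^{2 f'(t²) m i}·(t·e₁)` in `ℂ^N`, the image of the radial segment
`t ↦ t·e₁` under the time-`m` map of the Hamiltonian flow of `H(x) = f(‖x‖²)`. -/
noncomputable def radialCurve (N : ℕ) (hN : 0 < N) (f : ℝ → ℝ) (m : ℕ) (t : ℝ) :
    EuclideanSpace ℂ (Fin N) :=
  Complex.exp (((2 * deriv f (t ^ 2) * m : ℝ) : ℂ) * Complex.I) •
    ((t : ℂ) • EuclideanSpace.single (⟨0, hN⟩ : Fin N) (1 : ℂ))

theorem radialCurve_hasDerivAt (N : ℕ) (hN : 0 < N) (f : ℝ → ℝ) (hf : ContDiff ℝ 2 f)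
    (m : ℕ) (t : ℝ) : HasDerivAt (radialCurve N hN f m)
      ((Complex.exp (((2 * deriv f (t ^ 2) * m : ℝ) : ℂ) * Complex.I) *
        (1 + ((4 * m * deriv (deriv f) (t ^ 2) * t ^ 2 : ℝ) : ℂ) * Complex.I)) •
        EuclideanSpace.single (⟨0, hN⟩ : Fin N) (1 : ℂ)) t := by
  have h1 : ContDiff ℝ 1 (deriv f) := by
    have h2 : ContDiff ℝ (1 + 1) f := by simpa [one_add_one_eq_two] using hf
    exact (contDiff_succ_iff_deriv.1 h2).2.2
  have hd : HasDerivAt (deriv f) (deriv (deriv f) (t ^ 2)) (t ^ 2) :=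
    (h1.differentiable one_ne_zero _).hasDerivAt
  have hp : HasDerivAt (fun t : ℝ => t ^ 2) (2 * t) t := by
    simpa using hasDerivAt_pow 2 t
  have hphi : HasDerivAt (fun t : ℝ => 2 * deriv f (t ^ 2) * m)
      (2 * (deriv (deriv f) (t ^ 2) * (2 * t)) * m) t :=
    ((HasDerivAt.comp (h := fun t : ℝ => t ^ 2) t hd hp).const_mul 2).mul_const _
  have hg := ((hphi.ofReal_comp.mul_const Complex.I).cexp.mul
    (hasDerivAt_id t).ofReal_comp).smul_const
      (EuclideanSpace.single (⟨0, hN⟩ : Fin N) (1 : ℂ))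
  have e : radialCurve N hN f m = fun t : ℝ =>
      (Complex.exp (((2 * deriv f (t ^ 2) * m : ℝ) : ℂ) * Complex.I) * (t : ℂ)) •
        EuclideanSpace.single (⟨0, hN⟩ : Fin N) (1 : ℂ) := by
    funext t
    simp only [radialCurve, smul_smul]
  rw [e]
  refine HasDerivAt.congr_deriv hg ?_
  congr 1
  simp only [id]
  push_cast
  ring

/-- The curve `c_m` is differentiable with `‖c_m'(t)‖ = √(1 + 16 m² f''(t²)² t⁴)` on `[0,b]`,
and its length is at least `4m·∫₀^b |f''(t²)| t² dt`. -/
theorem stmt_10 (N : ℕ) (hN : 0 < N) (f : ℝ → ℝ) (hf : ContDiff ℝ 2 f)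
    (b : ℝ) (hb : 0 < b) (m : ℕ) :
    Differentiable ℝ (radialCurve N hN f m) ∧
    (∀ t ∈ Set.Icc (0:ℝ) b, ‖deriv (radialCurve N hN f m) t‖ =
      Real.sqrt (1 + 16 * (m : ℝ) ^ 2 * (deriv (deriv f) (t ^ 2)) ^ 2 * t ^ 4)) ∧
    4 * (m : ℝ) * ∫ t in (0:ℝ)..b, |deriv (deriv f) (t ^ 2)| * t ^ 2 ≤
      ∫ t in (0:ℝ)..b, ‖deriv (radialCurve N hN f m) t‖ := by
  have hD := radialCurve_hasDerivAt N hN f hf m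
  have hnorm : ∀ t : ℝ, ‖deriv (radialCurve N hN f m) t‖ =
      Real.sqrt (1 + 16 * (m : ℝ) ^ 2 * (deriv (deriv f) (t ^ 2)) ^ 2 * t ^ 4) := by
    intro t
    rw [(hD t).deriv, norm_smul, norm_mul, Complex.norm_exp_ofReal_mul_I]
    have : (1 : ℂ) = ((1 : ℝ) : ℂ) := by simp
    rw [EuclideanSpace.norm_single, norm_one, this, Complex.norm_add_mul_I]
    rw [one_mul, mul_one]
    congr 1
    ring
  have hc : Continuous (deriv (deriv f)) := by
    have h2 : ContDiff ℝ (1 + 1) f := by simpa [one_add_one_eq_two] using hf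
    exact (contDiff_succ_iff_deriv.1 h2).2.2.continuous_deriv le_rfl
  refine ⟨fun t => (hD t).differentiableAt, fun t _ => hnorm t, ?_⟩
  simp only [hnorm]
  rw [← intervalIntegral.integral_const_mul]
  apply intervalIntegral.integral_mono_on hb.le
  · apply Continuous.intervalIntegrable
    fun_prop
  · apply Continuous.intervalIntegrable
    fun_prop
  · intro t _
    apply Real.le_sqrt_of_sq_le
    have h := sq_abs (deriv (deriv f) (t ^ 2))
    have : (4 * (m : ℝ) * (|deriv (deriv f) (t ^ 2)| * t ^ 2)) ^ 2 =
        16 * (m : ℝ) ^ 2 * (deriv (deriv f) (t ^ 2)) ^ 2 * t ^ 4 := by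
      rw [← h]; ring
    rw [this]
    linarith
end
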